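/- Let T = T((m_1,1), …, (m_k,1); 0) and T' = T((n_1,1), …, (n_l,1); 0) be trees of diameter 4 with k, l ≥ 2 (so m_1 < … < m_k and n_1 < … < n_l are positive integers). If the right-angled Artin groups G(T) and G(T') are commensurable, then k = l and n_1/m_1 = n_2/m_2 = … = n_k/m_k. -/

import Mathlib

/-!
A commensuration of two of these groups matches up the conjugates of the generators of centres and
pivots, because these elements are recognized by their centralizers. Comparing the centralizers on
the two sides by Euler characteristics gives averaging identities between the tuples `m` and `n`,
which force them to be proportional.

**Vertex generators.** The group of the tree is a semidirect product of a free group on the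
conjugates of the leaf generators and the group `ℤ × F_k` generated by the centre and the pivots
(`raagEquiv`). Through actions of free groups on their Cayley trees, where elements commuting with a
translation have a commutator fixing an edge (`IsTreeDist.commutator_fixes_edge`), every nontrivial
element whose centralizer is not commutative is a conjugate of a power of the generator of the
centre or of a pivot (`model_special`). The centralizer of such a generator is the product of its
powers and the free group on its link (`model_cent`), so the two generators of an edge commute and
distinct commuting conjugates come from edges between the centre and a pivot (`commute_special`).

**Links.** Let `Γ` be a group with finite index embeddings into both groups (`CommPair`). Every
conjugate of a centre or pivot generator has a power corresponding to a power of a unique such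
conjugate on the other side, to which it is *linked* (`CommPair.exists_linked`, `Linked.unique`); the
ratio of the two exponents is its *stretch factor*. For a linked pair, the common centralizer in `Γ`
maps onto finite index subgroups of the free groups on the two links, with the same kernel. The
indices of these are related by the Euler characteristic (`index_mul_card_eq`). Each basis element
of the link decomposes the corresponding finite cover of a rose into circles, and circles
corresponding to each other have lengths in the ratio given by stretch factors (`sum_stretch_eq`).

**Averages.** Around a conjugate of the pivot with `d_i` leaves, the stretch factors of the
adjacent conjugates of the centre therefore add up to the index times `d_i w`, where `w` is
`1 / e_j` if the pivot is linked to one with `e_j` leaves, and `l / (l - 1)` if it is linked to a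
centre (`Linked.sum_stretch`). Summing over all cosets of a normal `Γ`, the total stretch of the
conjugates of the centre does not depend on the pivot used to compute it
(`CommPair.total_stretch`), so that `d_i` times the average of `w` does not depend on `i`. As the
group is generated by centralizers of vertex generators, either all centres are linked to centres or
all are linked to pivots; the second is impossible because then `w` would be constant and all `d_i`
equal (`CommPair.centerLinked`). Hence `r / d_i` is, for a constant `r`, the average of `1 / e_j`
over the pivots linked to the pivot `i` (`CommPair.isAverage`), and symmetrically.

**Proportionality.** Comparing extreme values in the two families of averages shows that all the
values averaged are equal, so that linked pivots have leaf numbers in the fixed ratio `r`. Two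
strictly increasing tuples related in this way are proportional (`proportional_of_averages`).
-/

/-- The defining relators of the right-angled Artin group of a simplicial graph:
one commutator for each edge. -/
def raagRels {V : Type} (G : SimpleGraph V) : Set (FreeGroup V) :=
  {r | ∃ u v : V, G.Adj u v ∧
    r = FreeGroup.of u * FreeGroup.of v * (FreeGroup.of u)⁻¹ * (FreeGroup.of v)⁻¹}

/-- The right-angled Artin group of a simplicial graph. -/
abbrev RAAG {V : Type} (G : SimpleGraph V) : Type := PresentedGroup (raagRels G)

/-- Two groups are (abstractly) commensurable if they have isomorphic
subgroups of finite index. -/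
def GroupsCommensurable (G H : Type*) [Group G] [Group H] : Prop :=
  ∃ (A : Subgroup G) (B : Subgroup H),
    A.FiniteIndex ∧ B.FiniteIndex ∧ Nonempty (↥A ≃* ↥B)

/-- The vertices of the tree `T((d₁,k₁),…,(d_l,k_l); q)` of diameter 4:
a center, `q` hairs, `k i` pivots of degree `d i + 1` for each `i`,
and `d i` leaves attached to each such pivot. -/
inductive T4V (l : ℕ) (d k : Fin l → ℕ) (q : ℕ) : Type where
  | center : T4V l d k q
  | hair : Fin q → T4V l d k q
  | pivot : (i : Fin l) → Fin (k i) → T4V l d k q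
  | leaf : (i : Fin l) → Fin (k i) → Fin (d i) → T4V l d k q

/-- Adjacency in the tree `T((d₁,k₁),…,(d_l,k_l); q)`: the center is joined to every
hair and every pivot, and each pivot is joined to its own leaves. -/
def t4Adj {l : ℕ} {d k : Fin l → ℕ} {q : ℕ} :
    T4V l d k q → T4V l d k q → Prop
  | .center, .hair _ => True
  | .center, .pivot _ _ => True
  | .pivot i j, .leaf i' j' _ => (⟨i, j⟩ : Σ i, Fin (k i)) = ⟨i', j'⟩
  | _, _ => False

/-- The tree `T((d₁,k₁),…,(d_l,k_l); q)` of diameter 4, as a simple graph. -/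
def t4Graph (l : ℕ) (d k : Fin l → ℕ) (q : ℕ) : SimpleGraph (T4V l d k q) :=
  SimpleGraph.fromRel t4Adj

/-! ### Tree metrics -/

/-- The properties of the vertex metric of a simplicial tree that are used below: it is a metric,
every geodesic has a unique first step, and two geodesics with a common origin and different first
steps concatenate to a geodesic. -/
structure IsTreeDist {V : Type*} (D : V → V → ℕ) : Prop where
  self : ∀ u, D u u = 0
  eq_of : ∀ u v, D u v = 0 → u = v
  symm : ∀ u v, D u v = D v u
  tri : ∀ u v w, D u w ≤ D u v + D v w
  step : ∀ u v, u ≠ v → ∃ w, D u w = 1 ∧ D w v + 1 = D u v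
  uniq : ∀ u v w w', D u w = 1 → D u w' = 1 → D w v + 1 = D u v → D w' v + 1 = D u v → w = w'
  branch : ∀ u v w a b, D u a = 1 → D u b = 1 → D a v + 1 = D u v → D b w + 1 = D u w → a ≠ b →
    D v w = D v u + D u w

/-- Elements commuting with a fixed-point-free automorphism `z` of a tree act on its axis by
translations, so their commutator fixes an edge of the axis (equivalently, the two products agree
on the two endpoints of an edge). -/
theorem IsTreeDist.commutator_fixes_edge {V : Type*} {D : V → V → ℕ} (hD : IsTreeDist D)
    {Γ : Type*} [Group Γ] [MulAction Γ V] (hiso : ∀ (g : Γ) u v, D (g • u) (g • v) = D u v)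
    [Nonempty V]
    (z : Γ) (hz : ∀ v : V, z • v ≠ v) (h₁ h₂ : Γ) (c₁ : Commute h₁ z) (c₂ : Commute h₂ z) :
    ∃ u w : V, D u w = 1 ∧ (h₁ * h₂) • u = (h₂ * h₁) • u ∧ (h₁ * h₂) • w = (h₂ * h₁) • w := by
  classical
  -- `n` is the translation length of `z`, and its axis is the set of vertices moved by exactly `n`
  obtain ⟨v₀, hv₀⟩ : ∃ v₀ : V, ∀ v, D v₀ (z • v₀) ≤ D v (z • v) := by
    exact ⟨Function.argmin (fun v : V => D v (z • v)),
      fun v => Function.argmin_le (fun v : V => D v (z • v)) v⟩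
  set n := D v₀ (z • v₀) with hn
  have hnpos : 0 < n := Nat.pos_of_ne_zero fun h => hz v₀ (hD.eq_of _ _ h).symm
  -- `stp u v` is the first step of the geodesic from `u` to `v`
  choose! stp hs1 hs2 using hD.step
  have huniq : ∀ u v w, u ≠ v → D u w = 1 → D w v + 1 = D u v → w = stp u v := fun u v w h a b =>
    hD.uniq u v w _ a (hs1 u v h) b (hs2 u v h)
  have hstep_smul : ∀ (g : Γ) u v, u ≠ v → stp (g • u) (g • v) = g • stp u v := by
    intro g u v huv
    symm
    apply huniq
    · simpa using huv
    · rw [hiso, hs1 _ _ huv]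
    · rw [hiso, hiso, hs2 _ _ huv]
  have hne : ∀ v : V, v ≠ z • v := fun v h => hz v h.symm
  have hne' : ∀ v : V, v ≠ z⁻¹ • v := fun v h => hz v (by rw [eq_inv_smul_iff] at h; exact h)
  have hDinv : ∀ v, D v (z⁻¹ • v) = D v (z • v) := by
    intro v
    rw [← hiso z v (z⁻¹ • v), smul_inv_smul, hD.symm]
  -- the axis is closed under stepping towards the image under `z` or `z⁻¹`, and these two steps are
  -- inverse to each other
  have hback : ∀ v, D v (z • v) = n → D (stp v (z • v)) (z • stp v (z • v)) = n := by
    intro v hv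
    apply le_antisymm _ (hv₀ _)
    have h1 := hD.tri (stp v (z • v)) (z • v) (z • stp v (z • v))
    rw [hiso, hs1 _ _ (hne v)] at h1
    have := hs2 _ _ (hne v)
    omega
  have hback' : ∀ v, D v (z • v) = n → D (stp v (z⁻¹ • v)) (z • stp v (z⁻¹ • v)) = n := by
    intro v hv
    apply le_antisymm _ (hv₀ _)
    rw [← hDinv]
    have h1 := hD.tri (stp v (z⁻¹ • v)) (z⁻¹ • v) (z⁻¹ • stp v (z⁻¹ • v))
    rw [hiso, hs1 _ _ (hne' v)] at h1
    have := hs2 _ _ (hne' v)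
    have := hDinv v
    omega
  have hinv1 : ∀ v, D v (z • v) = n →
      stp (stp v (z • v)) (z⁻¹ • stp v (z • v)) = v := by
    intro v hv
    symm
    apply huniq _ _ _ (hne' _)
    · rw [hD.symm, hs1 _ _ (hne v)]
    · have h := hback v hv
      rw [hDinv, h, ← hiso z, smul_inv_smul, hD.symm]
      have := hs2 _ _ (hne v)
      omega
  have hinv2 : ∀ v, D v (z • v) = n →
      stp (stp v (z⁻¹ • v)) (z • stp v (z⁻¹ • v)) = v := by
    intro v hv
    symm
    apply huniq _ _ _ (hne _)
    · rw [hD.symm, hs1 _ _ (hne' v)]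
    · have h := hback' v hv
      rw [h, ← hiso z⁻¹, inv_smul_smul, hD.symm]
      have := hs2 _ _ (hne' v)
      have := hDinv v
      omega
  -- the axis with its unit shift
  let Λ := {v : V // D v (z • v) = n}
  let S : Equiv.Perm Λ :=
    { toFun := fun v => ⟨stp v.1 (z • v.1), hback _ v.2⟩
      invFun := fun v => ⟨stp v.1 (z⁻¹ • v.1), hback' _ v.2⟩
      left_inv := fun v => Subtype.ext (hinv1 _ v.2)
      right_inv := fun v => Subtype.ext (hinv2 _ v.2) }
  -- a geodesic between axis points that left the axis at once would make `z` move its endpoint `v`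
  -- by more than `n`
  have hfirst : ∀ u v : V, D u (z • u) = n → D v (z • v) = n → u ≠ v →
      stp u v = stp u (z • u) ∨ stp u v = stp u (z⁻¹ • u) := by
    intro u v hu hv huv
    by_contra hcon
    push Not at hcon
    obtain ⟨ha, hb⟩ := hcon
    have e1 : D v (z • u) = D v u + n := by
      rw [← hu]
      exact hD.branch u v (z • u) _ _ (hs1 _ _ huv) (hs1 _ _ (hne u)) (hs2 _ _ huv)
        (hs2 _ _ (hne u)) ha
    have hzu : stp (z • u) u = z • stp u (z⁻¹ • u) := by
      rw [← hstep_smul _ _ _ (hne' u), smul_inv_smul]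
    have hzv : stp (z • u) (z • v) = z • stp u v := hstep_smul _ _ _ huv
    have hvzu : v ≠ z • u := by
      rintro h
      rw [← h, hD.self] at e1
      omega
    have e2 : stp (z • u) v = stp (z • u) u := by
      symm
      apply huniq _ _ _ hvzu.symm (hs1 _ _ (hne u).symm)
      have a1 := hs2 _ _ (hne u).symm
      have a2 := hD.tri (stp (z • u) u) u v
      have a3 := hD.tri (z • u) (stp (z • u) u) v
      rw [hs1 _ _ (hne u).symm] at a3
      rw [hD.symm (z • u) u] at a1
      rw [hD.symm (z • u) v] at a3 ⊢
      rw [hD.symm u v] at a2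
      omega
    have e3 : D v (z • v) = D v (z • u) + D (z • u) (z • v) := by
      apply hD.branch (z • u) v (z • v) _ _ (hs1 _ _ hvzu.symm) (hs1 _ _ _)
        (hs2 _ _ hvzu.symm) (hs2 _ _ _)
      · rw [e2, hzu, hzv]
        intro h
        exact hb (smul_left_cancel _ h).symm
      · simpa using huv
      · simpa using huv
    rw [hiso, hv, e1] at e3
    have : D u v ≠ 0 := fun h => huv (hD.eq_of _ _ h)
    omega
  -- hence the axis is a single orbit of the shift
  have htrans : ∀ (N : ℕ) (u v : Λ), D u.1 v.1 = N → ∃ t : ℤ, v = (S ^ t) u := by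
    intro N
    induction N with
    | zero => intro u v h; exact ⟨0, by simpa using (Subtype.ext (hD.eq_of _ _ h)).symm⟩
    | succ N ih =>
      intro u v h
      have huv : u.1 ≠ v.1 := by
        intro e
        rw [e, hD.self] at h
        omega
      have h2 := hs2 _ _ huv
      rcases hfirst u.1 v.1 u.2 v.2 huv with e | e
      · obtain ⟨t, ht⟩ := ih (S u) v (by change D (stp u.1 (z • u.1)) v.1 = N; rw [← e]; omega)
        exact ⟨t + 1, by rw [ht, zpow_add_one]; rfl⟩
      · obtain ⟨t, ht⟩ := ih (S⁻¹ u) v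
          (by change D (stp u.1 (z⁻¹ • u.1)) v.1 = N; rw [← e]; omega)
        exact ⟨t - 1, by rw [ht, zpow_sub_one]; rfl⟩
  -- an element commuting with `z` preserves the axis and commutes with its shift
  have hact : ∀ h : Γ, Commute h z → ∀ v : Λ, D (h • v.1) (z • h • v.1) = n := by
    intro h hc v
    rw [← mul_smul, ← hc.eq, mul_smul, hiso, v.2]
  have hactS : ∀ (h : Γ) (hc : Commute h z) (t : ℤ) (v : Λ),
      (⟨h • ((S ^ t) v).1, hact h hc _⟩ : Λ) = (S ^ t) ⟨h • v.1, hact h hc v⟩ := by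
    intro h hc t
    have base : ∀ v : Λ, (⟨h • (S v).1, hact h hc _⟩ : Λ) = S ⟨h • v.1, hact h hc v⟩ := by
      intro v
      apply Subtype.ext
      change h • stp v.1 (z • v.1) = stp (h • v.1) (z • h • v.1)
      rw [← mul_smul z, ← hc.eq, mul_smul, hstep_smul _ _ _ (hne _)]
    have base' : ∀ v : Λ, (⟨h • (S⁻¹ v).1, hact h hc _⟩ : Λ) = S⁻¹ ⟨h • v.1, hact h hc v⟩ := by
      intro v
      rw [Equiv.Perm.eq_inv_iff_eq, ← base]
      simp
    induction t with
    | zero => intro v; simp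
    | succ t ih => intro v; simp only [zpow_add_one, Equiv.Perm.mul_apply]; rw [ih, base]
    | pred t ih => intro v; simp only [zpow_sub_one, Equiv.Perm.mul_apply]; rw [ih, base']
  -- on the axis both `h₁` and `h₂` act as powers of the shift, and these commute
  have key : ∀ v : Λ, (h₁ * h₂) • v.1 = (h₂ * h₁) • v.1 := by
    intro v
    obtain ⟨t₁, e₁⟩ := htrans _ v ⟨h₁ • v.1, hact h₁ c₁ v⟩ rfl
    obtain ⟨t₂, e₂⟩ := htrans _ v ⟨h₂ • v.1, hact h₂ c₂ v⟩ rfl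
    have a₁ := hactS h₁ c₁ t₂ v
    have a₂ := hactS h₂ c₂ t₁ v
    have b₁ : h₁ • h₂ • v.1 = h₁ • ((S ^ t₂) v).1 := by rw [← e₂]
    have b₂ : h₂ • h₁ • v.1 = h₂ • ((S ^ t₁) v).1 := by rw [← e₁]
    rw [mul_smul, mul_smul, b₁, b₂]
    rw [e₁] at a₁
    rw [e₂] at a₂
    have e : (S ^ t₂) ((S ^ t₁) v) = (S ^ t₁) ((S ^ t₂) v) := by
      rw [← Equiv.Perm.mul_apply, ← Equiv.Perm.mul_apply, ← zpow_add, ← zpow_add, add_comm]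
    exact congrArg Subtype.val (a₁.trans (e.trans a₂.symm))
  exact ⟨v₀, (S ⟨v₀, rfl⟩).1, hs1 _ _ (hne _), key ⟨v₀, rfl⟩, key _⟩

/-! ### The Cayley tree of a free group -/

/-- Distance between two vertices of the Cayley tree of a free group. -/
def fgDist {X : Type*} [DecidableEq X] (u v : FreeGroup X) : ℕ := (u⁻¹ * v).norm

section FreeGroupTree
variable {X : Type*} [DecidableEq X]

/-- There is no cancellation in `a⁻¹ * b` when the reduced words of `a` and `b` start
differently. -/
theorem norm_inv_mul_of_head_ne {a b : FreeGroup X} (h : a.toWord.head? ≠ b.toWord.head?) :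
    (a⁻¹ * b).norm = a.norm + b.norm := by
  have hred : FreeGroup.IsReduced (FreeGroup.invRev a.toWord ++ b.toWord) := by
    rw [FreeGroup.IsReduced, List.isChain_append]
    refine ⟨?_, FreeGroup.isReduced_toWord, ?_⟩
    · rw [← FreeGroup.toWord_inv]; exact FreeGroup.isReduced_toWord
    · intro x hx y hy hxy
      by_contra hne
      apply h
      rw [Option.mem_def] at hx hy
      rw [hy]
      simp only [FreeGroup.invRev, List.getLast?_reverse, List.head?_map,
        Option.map_eq_some_iff] at hx
      obtain ⟨p, hp, rfl⟩ := hx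
      rw [hp]
      congr 1
      refine Prod.ext hxy ?_
      revert hne
      simp
  unfold FreeGroup.norm
  rw [FreeGroup.toWord_mul, FreeGroup.toWord_inv, hred.reduce_eq, List.length_append,
    FreeGroup.invRev_length]

theorem norm_letter (s : X × Bool) : (FreeGroup.mk [s]).toWord = [s] := by
  simp [FreeGroup.toWord_mk]

theorem letter_of_norm_one {g : FreeGroup X} (h : g.norm = 1) : ∃ s, g = FreeGroup.mk [s] := by
  obtain ⟨s, hs⟩ := List.length_eq_one_iff.1 h
  exact ⟨s, by rw [← hs, FreeGroup.mk_toWord]⟩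

theorem head_of_shorten {g : FreeGroup X} {s : X × Bool}
    (h : ((FreeGroup.mk [s])⁻¹ * g).norm + 1 = g.norm) : g.toWord.head? = some s := by
  by_contra hne
  have := norm_inv_mul_of_head_ne (a := FreeGroup.mk [s]) (b := g) (by
    rw [norm_letter]; exact fun e => hne e.symm)
  have h1 : (FreeGroup.mk [s]).norm = 1 := by simp [FreeGroup.norm]
  omega

theorem shorten_of_head {g : FreeGroup X} {s : X × Bool} (h : g.toWord.head? = some s) :
    ((FreeGroup.mk [s])⁻¹ * g).norm + 1 = g.norm := by
  obtain ⟨t, ht⟩ : ∃ t, g.toWord = s :: t := by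
    cases hg : g.toWord with
    | nil => simp [hg] at h
    | cons a t => simp [hg] at h; exact ⟨t, by rw [h]⟩
  have hg : g = FreeGroup.mk [s] * FreeGroup.mk t := by
    rw [FreeGroup.mul_mk, List.singleton_append, ← ht, FreeGroup.mk_toWord]
  have hred : FreeGroup.IsReduced t := by
    have := FreeGroup.isReduced_toWord (x := g)
    rw [ht] at this
    exact List.IsChain.tail this
  have : (FreeGroup.mk t).norm = t.length := by
    simp [FreeGroup.norm, hred.reduce_eq]
  have h2 : g.norm = t.length + 1 := by simp [FreeGroup.norm, ht]
  have h3 : (FreeGroup.mk [s])⁻¹ * g = FreeGroup.mk t := by rw [hg]; group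
  rw [h3]
  omega

theorem isTreeDist_fgDist : IsTreeDist (fgDist (X := X)) where
  self u := by simp [fgDist]
  eq_of u v h := by
    have := FreeGroup.norm_eq_zero.1 h
    exact (inv_mul_eq_one.1 this)
  symm u v := by
    unfold fgDist
    rw [← FreeGroup.norm_inv_eq]; simp
  tri u v w := by
    unfold fgDist
    have : u⁻¹ * w = (u⁻¹ * v) * (v⁻¹ * w) := by group
    rw [this]; exact FreeGroup.norm_mul_le _ _
  step u v h := by
    have hne : (u⁻¹ * v).toWord ≠ [] := by
      rw [Ne, FreeGroup.toWord_eq_nil_iff, inv_mul_eq_one]; exact h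
    obtain ⟨s, t, hst⟩ := List.exists_cons_of_ne_nil hne
    refine ⟨u * FreeGroup.mk [s], by simp [fgDist, FreeGroup.norm], ?_⟩
    have := shorten_of_head (g := u⁻¹ * v) (s := s) (by simp [hst])
    unfold fgDist
    rw [← this, mul_inv_rev, mul_assoc]
  uniq u v w w' h1 h2 h3 h4 := by
    obtain ⟨s, hs⟩ := letter_of_norm_one h1
    obtain ⟨s', hs'⟩ := letter_of_norm_one h2
    obtain rfl := inv_mul_eq_iff_eq_mul.1 hs
    obtain rfl := inv_mul_eq_iff_eq_mul.1 hs'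
    unfold fgDist at h3 h4
    rw [mul_inv_rev, mul_assoc] at h3 h4
    have := (head_of_shorten h3).symm.trans (head_of_shorten h4)
    rw [Option.some_inj.1 this]
  branch u v w a b h1 h2 h3 h4 h := by
    obtain ⟨s, hs⟩ := letter_of_norm_one h1
    obtain ⟨s', hs'⟩ := letter_of_norm_one h2
    obtain rfl := inv_mul_eq_iff_eq_mul.1 hs
    obtain rfl := inv_mul_eq_iff_eq_mul.1 hs'
    unfold fgDist at h3 h4 ⊢
    rw [mul_inv_rev, mul_assoc] at h3 h4
    have e : v⁻¹ * w = (u⁻¹ * v)⁻¹ * (u⁻¹ * w) := by group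
    rw [e, norm_inv_mul_of_head_ne, ← FreeGroup.norm_inv_eq (x := v⁻¹ * u), mul_inv_rev, inv_inv]
    rw [head_of_shorten h3, head_of_shorten h4]
    intro e
    exact h (by rw [Option.some_inj.1 e])

end FreeGroupTree

/-- Commutation is transitive on the nontrivial elements of a free group. -/
theorem freeGroup_commute_trans {X : Type*} {w a b : FreeGroup X} (hw : w ≠ 1)
    (ha : Commute a w) (hb : Commute b w) : Commute a b := by
  classical
  obtain ⟨u, -, -, h, -⟩ := isTreeDist_fgDist (X := X).commutator_fixes_edge (Γ := FreeGroup X)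
    (by intro g u v; simp [fgDist, mul_assoc]) w (by intro v h; exact hw (by simpa using h))
    a b ha hb
  exact (by simpa using h : a * b = b * a)

theorem freeGroup_of_zpow_ne_one {X : Type*} (x : X) {m : ℤ} (hm : m ≠ 0) :
    FreeGroup.of x ^ m ≠ 1 := by
  rw [Ne, IsMulTorsionFree.zpow_eq_one_iff_left hm]
  exact FreeGroup.of_ne_one x

/-- The centralizer of a nontrivial power of a basis element consists of the powers of that
element. -/
theorem freeGroup_eq_zpow_of_commute {X : Type*} {u : FreeGroup X} {x : X} {m : ℤ} (hm : m ≠ 0)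
    (h : Commute u (FreeGroup.of x ^ m)) : ∃ e : ℤ, u = FreeGroup.of x ^ e := by
  classical
  have h1 : Commute u (FreeGroup.of x) :=
    freeGroup_commute_trans (freeGroup_of_zpow_ne_one x hm) h (Commute.self_zpow _ _)
  clear h hm m
  induction hN : u.norm using Nat.strong_induction_on generalizing u with
  | _ N ih =>
    by_cases hu : u = 1
    · exact ⟨0, by simpa using hu⟩
    have hx : FreeGroup.of x = FreeGroup.mk [(x, true)] := rfl
    have hxi : (FreeGroup.of x)⁻¹ = FreeGroup.mk [(x, false)] := rfl
    by_cases c1 : u.toWord.head? = some (x, true)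
    · have := shorten_of_head c1
      rw [← hx] at this
      obtain ⟨e, he⟩ := ih _ (by omega)
        (Commute.mul_left (Commute.refl _).inv_left h1) rfl
      exact ⟨1 + e, by rw [zpow_add, ← he]; simp⟩
    by_cases c2 : u.toWord.head? = some (x, false)
    · have := shorten_of_head c2
      rw [← hxi, inv_inv] at this
      obtain ⟨e, he⟩ := ih _ (by omega) (Commute.mul_left (Commute.refl _) h1) rfl
      exact ⟨-1 + e, by rw [zpow_add, ← he]; simp⟩
    -- `x * u` is reduced and starts with `x`, while `u` does not, so nothing cancels in
    -- `u⁻¹ * (x * u) = x`, which forces `u = 1`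
    exfalso
    have n1 : (FreeGroup.of x * u).norm = 1 + u.norm := by
      have := norm_inv_mul_of_head_ne (a := (FreeGroup.of x)⁻¹) (b := u) (by
        rw [hxi, norm_letter]; exact fun e => c2 e.symm)
      rwa [inv_inv, FreeGroup.norm_inv_eq, FreeGroup.norm_of] at this
    have hd : (FreeGroup.of x * u).toWord.head? = some (x, true) := by
      apply head_of_shorten
      rw [← hx, inv_mul_cancel_left, n1, add_comm]
    have n2 := norm_inv_mul_of_head_ne (a := u) (b := FreeGroup.of x * u) (by rw [hd]; exact c1)
    rw [← h1.eq, inv_mul_cancel_left, FreeGroup.norm_of, h1.eq, n1] at n2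
    exact hu (FreeGroup.norm_eq_zero.1 (by omega))

/-- If conjugates of powers of two basis elements agree, then the basis elements are the same and
the conjugators differ by a power of it. -/
theorem freeGroup_conj_zpow_eq {X : Type*} {u : FreeGroup X} {x y : X} {m n : ℤ} (hm : m ≠ 0)
    (h : u * FreeGroup.of x ^ m * u⁻¹ = FreeGroup.of y ^ n) :
    x = y ∧ m = n ∧ ∃ e : ℤ, u = FreeGroup.of x ^ e := by
  classical
  have hxy : x = y := by
    by_contra hne
    -- compare the exponent sums of `x`
    have := congrArg (FreeGroup.lift fun z => Multiplicative.ofAdd (if z = x then (1 : ℤ) else 0)) h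
    simp [Ne.symm hne, ← ofAdd_zsmul] at this
    exact hm this
  subst hxy
  have hmn : m = n := by
    have := congrArg (FreeGroup.lift fun z => Multiplicative.ofAdd (if z = x then (1 : ℤ) else 0)) h
    simpa [← ofAdd_zsmul] using this
  subst hmn
  refine ⟨rfl, rfl, freeGroup_eq_zpow_of_commute hm ?_⟩
  rw [mul_inv_eq_iff_eq_mul] at h
  exact h

/-- The letters of a word fixed by a permutation of the basis are fixed. -/
theorem freeGroup_map_fixed {X : Type*} [DecidableEq X] (e : X ≃ X) {f : FreeGroup X}
    (h : FreeGroup.freeGroupCongr e f = f) : ∀ p ∈ f.toWord, e p.1 = p.1 := by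
  have h1 : f.toWord.map (fun p => (e p.1, p.2)) = f.toWord := by
    have hred : FreeGroup.IsReduced (f.toWord.map (fun p => (e p.1, p.2))) := by
      rw [FreeGroup.IsReduced, List.isChain_map]
      refine List.IsChain.imp ?_ (FreeGroup.isReduced_toWord (x := f))
      intro a b hab h
      exact hab (e.injective h)
    have h2 := congrArg FreeGroup.toWord h
    conv_lhs at h2 => rw [← FreeGroup.mk_toWord (x := f)]
    rw [FreeGroup.freeGroupCongr_apply, FreeGroup.map.mk, FreeGroup.toWord_mk, hred.reduce_eq] at h2
    exact h2
  intro p hp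
  have h2 : ∀ q ∈ f.toWord, (e q.1, q.2) = q := by
    apply List.map_inj_left.1
    rw [h1]; simp
  exact congrArg Prod.fst (h2 p hp)

/-! ### Counting homomorphisms on finite index subgroups -/

/-- The `Z`-valued `1`-cocycles of an action of `F` on a set `X`, i.e. the crossed homomorphisms
from `F` to the functions on `X`. -/
def ActionCocycle (F X Z : Type*) [Group F] [MulAction F X] [AddCommGroup Z] :=
  {c : F → X → Z // ∀ g h x, c (g * h) x = c g (h • x) + c h x}

namespace ActionCocycle

section
variable {F X Z : Type*} [Group F] [MulAction F X] [AddCommGroup Z]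

theorem map_one (c : ActionCocycle F X Z) (x : X) : c.1 1 x = 0 := by
  have := c.2 1 1 x
  simpa using this

theorem map_inv (c : ActionCocycle F X Z) (g : F) (x : X) : c.1 g⁻¹ x = -c.1 g (g⁻¹ • x) := by
  have := c.2 g g⁻¹ x
  rw [mul_inv_cancel, map_one] at this
  exact (neg_eq_of_add_eq_zero_right this.symm).symm

end

/-- Over a free group a cocycle is freely and uniquely determined by its values on a basis. -/
theorem bijective_eval {B X Z : Type*} [MulAction (FreeGroup B) X] [AddCommGroup Z] :
    Function.Bijective
      (fun (c : ActionCocycle (FreeGroup B) X Z) (b : B) => c.1 (FreeGroup.of b)) := by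
  constructor
  · intro c c' h
    apply Subtype.ext
    funext g
    induction g using FreeGroup.induction_on with
    | C1 => funext x; rw [c.map_one, c'.map_one]
    | of b => exact congrFun h b
    | inv_of b ih =>
      funext x
      rw [c.map_inv, c'.map_inv]
      exact congrArg Neg.neg (congrFun ih _)
    | mul g h ihg ihh => funext x; rw [c.2, c'.2, ihg, ihh]
  · intro t
    -- a cocycle is the same as a translation-equivariant action on `X × Z` covering that on `X`
    let e : B → Equiv.Perm (X × Z) := fun b =>
      { toFun := fun p => (FreeGroup.of b • p.1, p.2 + t b p.1)
        invFun := fun p => ((FreeGroup.of b)⁻¹ • p.1, p.2 - t b ((FreeGroup.of b)⁻¹ • p.1))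
        left_inv := fun p => by simp
        right_inv := fun p => by simp }
    let Φ : FreeGroup B →* Equiv.Perm (X × Z) := FreeGroup.lift e
    have hof : ∀ b p, Φ (FreeGroup.of b) p = (FreeGroup.of b • p.1, p.2 + t b p.1) := by
      intro b p; simp [Φ, e]
    have hΦ : ∀ g x z, Φ g (x, z) = (g • x, z + (Φ g (x, 0)).2) := by
      intro g
      induction g using FreeGroup.induction_on with
      | C1 => intro x z; simp
      | of b => intro x z; simp [hof]
      | inv_of b ih =>
        intro x z
        have h1 : ∀ p, Φ (FreeGroup.of b)⁻¹ p
            = ((FreeGroup.of b)⁻¹ • p.1, p.2 - t b ((FreeGroup.of b)⁻¹ • p.1)) := by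
          intro p
          rw [_root_.map_inv, Equiv.Perm.inv_eq_iff_eq, hof]
          simp
        rw [h1, h1]
        simp [sub_eq_add_neg]
      | mul g h ihg ihh =>
        intro x z
        rw [map_mul, Equiv.Perm.mul_apply, Equiv.Perm.mul_apply, ihh, ihg, ihh x 0, zero_add,
          ihg _ (Φ h (x, 0)).2]
        simp [mul_smul, add_comm, add_left_comm]
    refine ⟨⟨fun g x => (Φ g (x, 0)).2, ?_⟩, ?_⟩
    · intro g h x
      simp only [map_mul, Equiv.Perm.mul_apply]
      rw [hΦ h x 0, zero_add, hΦ g]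
      simp [add_comm]
    · funext b x
      simp [hof]

section
variable {F : Type*} [Group F] (R : Subgroup F)

theorem out_smul (x : F ⧸ R) : x.out • ((1 : F) : F ⧸ R) = x := by
  rw [MulAction.Quotient.smul_coe, smul_eq_mul, mul_one, QuotientGroup.out_eq']

/-- The Schreier element of `R` comparing `g` times the representative of the coset `x` with the
representative of `g • x`. -/
noncomputable def returnElt (g : F) (x : F ⧸ R) : R :=
  ⟨(g • x).out⁻¹ * (g * x.out), by
    have h : (((g • x).out : F) : F ⧸ R) = ((g * x.out : F) : F ⧸ R) := by
      rw [QuotientGroup.out_eq', ← smul_eq_mul, ← MulAction.Quotient.smul_coe,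
        QuotientGroup.out_eq']
    exact QuotientGroup.eq.1 h⟩

theorem returnElt_mul (g h : F) (x : F ⧸ R) :
    returnElt R (g * h) x = returnElt R g (h • x) * returnElt R h x :=
  Subtype.ext (by simp [returnElt, mul_smul, mul_assoc])

theorem out_one_mem : ((1 : F) : F ⧸ R).out ∈ R := by
  have := QuotientGroup.out_eq' ((1 : F) : F ⧸ R)
  rw [QuotientGroup.eq] at this
  simpa using this

theorem returnElt_out (x : F ⧸ R) : returnElt R x.out (1 : F) = ⟨_, out_one_mem R⟩ :=
  Subtype.ext (by simp [returnElt])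

theorem returnElt_self (r : R) :
    returnElt R r (1 : F) = (⟨_, out_one_mem R⟩ : R)⁻¹ * (r * ⟨_, out_one_mem R⟩) := by
  have hr : r.1 • ((1 : F) : F ⧸ R) = (1 : F) := by
    rw [MulAction.Quotient.smul_coe, QuotientGroup.eq]; simp
  exact Subtype.ext (by simp [returnElt, hr])

/-- Shapiro's lemma on the level of cocycles: a cocycle on the coset space of a subgroup `R` amounts
to a homomorphism from `R` together with a function on the coset space. The function is determined
only up to a constant, whence the extra factor `Z` on the left. -/
noncomputable def shapiro {Z : Type*} [AddCommGroup Z] :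
    ActionCocycle F (F ⧸ R) Z × Z ≃ (R →* Multiplicative Z) × ((F ⧸ R) → Z) where
  toFun p :=
    ({ toFun := fun r => Multiplicative.ofAdd (p.1.1 r.1 (1 : F))
       map_one' := by simp [p.1.map_one]
       map_mul' := fun r r' => by
        have : r'.1 • ((1 : F) : F ⧸ R) = (1 : F) := by
          rw [MulAction.Quotient.smul_coe, QuotientGroup.eq]; simp
        rw [Subgroup.coe_mul, p.1.2, this, ofAdd_add] },
     fun x => p.1.1 x.out (1 : F) - p.1.1 ((1 : F) : F ⧸ R).out (1 : F) + p.2)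
  invFun p :=
    (⟨fun g x => Multiplicative.toAdd (p.1 (returnElt R g x)) + (p.2 (g • x) - p.2 x), by
      intro g h x
      simp only [returnElt_mul, map_mul, toAdd_mul, mul_smul]
      abel⟩, p.2 ((1 : F) : F ⧸ R))
  left_inv := by
    rintro ⟨c, z⟩
    refine Prod.ext (Subtype.ext ?_) ?_
    · funext g x
      simp only [MonoidHom.coe_mk, OneHom.coe_mk, toAdd_ofAdd, returnElt]
      rw [c.2, c.map_inv, c.2, out_smul]
      have : (g • x).out⁻¹ • g • x = ((1 : F) : F ⧸ R) := by
        rw [inv_smul_eq_iff, out_smul]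
      rw [mul_smul, out_smul, this]
      abel
    · simp
  right_inv := by
    rintro ⟨θ, u⟩
    refine Prod.ext (MonoidHom.ext ?_) ?_
    · intro r
      have hr : r.1 • ((1 : F) : F ⧸ R) = (1 : F) := by
        rw [MulAction.Quotient.smul_coe, QuotientGroup.eq]; simp
      apply Multiplicative.toAdd.injective
      simp only [MonoidHom.coe_mk, OneHom.coe_mk, toAdd_ofAdd]
      rw [hr, sub_self, add_zero, returnElt_self]
      refine congrArg Multiplicative.toAdd ?_
      rw [map_mul θ, map_mul θ, mul_comm (θ r), _root_.map_inv θ, inv_mul_cancel_left]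
    · funext x
      simp only [returnElt_out, out_smul]
      abel

end

end ActionCocycle

/-- Schreier's index formula, phrased as a count of homomorphisms to the group of order two. -/
theorem card_hom_finite_index {B : Type*} [Fintype B] (R : Subgroup (FreeGroup B))
    [R.FiniteIndex] :
    Nat.card (R →* Multiplicative (ZMod 2)) * 2 ^ R.index =
      2 ^ (R.index * Fintype.card B) * 2 := by
  have h1 := Nat.card_congr (ActionCocycle.shapiro (Z := ZMod 2) R)
  have h2 := Nat.card_congr (Equiv.ofBijective _
    (ActionCocycle.bijective_eval (B := B) (X := FreeGroup B ⧸ R) (Z := ZMod 2)))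
  rw [Nat.card_prod, Nat.card_prod, h2] at h1
  have := Fintype.ofFinite (FreeGroup B ⧸ R)
  have h3 : Nat.card ((FreeGroup B ⧸ R) → ZMod 2) = 2 ^ R.index := by
    rw [Nat.card_fun, Nat.card_zmod]; rfl
  have h4 : Nat.card (B → (FreeGroup B ⧸ R) → ZMod 2) = 2 ^ (R.index * Fintype.card B) := by
    rw [Nat.card_fun, h3, ← pow_mul, Nat.card_eq_fintype_card]
  -- `h1` now counts the cocycles on the coset space, by their values on the basis and by Shapiro
  rw [h3, h4, Nat.card_zmod] at h1
  exact h1.symm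

/-- Two finite-index images, in free groups, of one group under homomorphisms with the same kernel
have the same Euler characteristic. -/
theorem index_mul_card_eq {A B B' : Type*} [Group A] [Fintype B] [Fintype B']
    (α : A →* FreeGroup B) (α' : A →* FreeGroup B') (hker : α.ker = α'.ker)
    [α.range.FiniteIndex] [α'.range.FiniteIndex] :
    α.range.index * Fintype.card B + α'.range.index
      = α'.range.index * Fintype.card B' + α.range.index := by
  have e : α.range ≃* α'.range := (QuotientGroup.quotientKerEquivRange α).symm.trans
    ((QuotientGroup.quotientMulEquivOfEq hker).trans (QuotientGroup.quotientKerEquivRange α'))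
  have e2 : Nat.card (α.range →* Multiplicative (ZMod 2))
      = Nat.card (α'.range →* Multiplicative (ZMod 2)) :=
    Nat.card_congr (MulEquiv.monoidHomCongrLeft e).toEquiv
  have h1 := card_hom_finite_index α.range
  have h2 := card_hom_finite_index α'.range
  rw [e2] at h1
  set c := Nat.card (α'.range →* Multiplicative (ZMod 2))
  have h3 : 2 ^ (α.range.index * Fintype.card B + α'.range.index + 1)
      = 2 ^ (α'.range.index * Fintype.card B' + α.range.index + 1) := by
    rw [pow_succ, pow_add, mul_right_comm, ← h1, pow_succ, pow_add,
      mul_right_comm (2 ^ (α'.range.index * _)), ← h2]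
    ring
  have := Nat.pow_right_injective le_rfl h3
  omega

/-! ### Stretch factors -/

theorem freeGroup_conj_zpow_eq' {X : Type*} {u v : FreeGroup X} {x y : X} {m n : ℤ} (hm : m ≠ 0)
    (h : u⁻¹ * FreeGroup.of x ^ m * u = v⁻¹ * FreeGroup.of y ^ n * v) :
    x = y ∧ m = n ∧ ∃ e : ℤ, v = FreeGroup.of x ^ e * u := by
  obtain ⟨h1, h2, e, he⟩ := freeGroup_conj_zpow_eq (u := v * u⁻¹) (x := x) (y := y) (n := n) hm (by
    have := congrArg (fun g => v * g * v⁻¹) h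
    simpa [mul_assoc] using this)
  exact ⟨h1, h2, e, by rw [← he]; group⟩

theorem conj_zpow_aux {G : Type*} [Group G] (y s : G) (m n : ℤ) :
    (y⁻¹ * s ^ m * y) ^ n = y⁻¹ * s ^ (m * n) * y := by
  have := conj_zpow (a := y⁻¹) (b := s ^ m) (i := n)
  rw [inv_inv] at this
  rw [this, zpow_mul]

section
variable {A B B' : Type*} [Group A] (α : A →* FreeGroup B) (α' : A →* FreeGroup B')

/-- The subgroup `α.range` corresponds to a cover of the rose with petals `B`, whose vertices are
the cosets; the preimages of a petal are circles. A pair of a basis element and a coset stands for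
the circle labelled by this element through this vertex, so a circle is recorded once for every
vertex on it. Two circles, one in the cover of each rose, are related if some element of `A` is
mapped by both `α` and `α'` to nontrivial powers of them. -/
def AxisRel (p : B × (FreeGroup B ⧸ α.range)) (p' : B' × (FreeGroup B' ⧸ α'.range)) : Prop :=
  ∃ (y : FreeGroup B) (y' : FreeGroup B') (a : A) (m m' : ℤ), m ≠ 0 ∧ m' ≠ 0 ∧
    (y : _ ⧸ α.range) = p.2 ∧ (y' : _ ⧸ α'.range) = p'.2 ∧ α a = y⁻¹ * FreeGroup.of p.1 ^ m * y ∧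
    α' a = y'⁻¹ * FreeGroup.of p'.1 ^ m' * y'

variable {α α'}

theorem AxisRel.symm
    {p : B × (FreeGroup B ⧸ α.range)} {p' : B' × (FreeGroup B' ⧸ α'.range)}
    (h : AxisRel α α' p p') : AxisRel α' α p' p := by
  obtain ⟨y, y', a, m, m', h1, h2, h3, h4, h5, h6⟩ := h
  exact ⟨y', y, a, m', m, h2, h1, h4, h3, h6, h5⟩

theorem AxisRel.comm
    {p : B × (FreeGroup B ⧸ α.range)} {p' : B' × (FreeGroup B' ⧸ α'.range)} :
    AxisRel α α' p p' ↔ AxisRel α' α p' p := ⟨AxisRel.symm, AxisRel.symm⟩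

/-- The representative of the second coset in the definition of `AxisRel` may be prescribed. -/
theorem AxisRel.exists_of_rep
    {p : B × (FreeGroup B ⧸ α.range)} {p' : B' × (FreeGroup B' ⧸ α'.range)}
    (h : AxisRel α α' p p') (z' : FreeGroup B') (hz' : (z' : _ ⧸ α'.range) = p'.2) :
    ∃ (y : FreeGroup B) (a : A) (m m' : ℤ), m ≠ 0 ∧ m' ≠ 0 ∧ (y : _ ⧸ α.range) = p.2 ∧
    α a = y⁻¹ * FreeGroup.of p.1 ^ m * y ∧ α' a = z'⁻¹ * FreeGroup.of p'.1 ^ m' * z' := by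
  obtain ⟨y, y', a, m, m', h1, h2, h3, h4, h5, h6⟩ := h
  rw [← h4, QuotientGroup.eq] at hz'
  obtain ⟨c, hc⟩ := hz'
  refine ⟨y * (α c)⁻¹, c * a * c⁻¹, m, m', h1, h2, ?_, ?_, ?_⟩
  · rw [← h3, QuotientGroup.eq]; simp
  · simp [h5, mul_assoc]
  · simp [h6, hc, mul_assoc]

theorem apply_eq_of_ker_eq (hker : α.ker = α'.ker) {a b : A} (h : α a = α b) : α' a = α' b := by
  have : a⁻¹ * b ∈ α.ker := by rw [MonoidHom.mem_ker]; simp [h]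
  rw [hker, MonoidHom.mem_ker, map_mul, map_inv, inv_mul_eq_one] at this
  exact this

theorem exponent_ne_zero (hker : α.ker = α'.ker) {a : A} {y : FreeGroup B} {y' : FreeGroup B'}
    {s : B} {s' : B'} {m m' : ℤ} (hm : m ≠ 0) (h1 : α a = y⁻¹ * FreeGroup.of s ^ m * y)
    (h2 : α' a = y'⁻¹ * FreeGroup.of s' ^ m' * y') : m' ≠ 0 := by
  rintro rfl
  have h3 : α a = α 1 := apply_eq_of_ker_eq hker.symm (by rw [h2]; simp)
  rw [h1, map_one, mul_assoc, inv_mul_eq_one] at h3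
  exact freeGroup_of_zpow_ne_one s hm (right_eq_mul.1 h3)

/-- At most one circle is related to a given one: the pairs related to `p'` are the points of a
single orbit of a basis element. -/
theorem AxisRel.iff_orbit (hker : α.ker = α'.ker) {p q : B × (FreeGroup B ⧸ α.range)}
    {p' : B' × (FreeGroup B' ⧸ α'.range)} (h : AxisRel α α' p p') :
    AxisRel α α' q p' ↔ q.1 = p.1 ∧ ∃ e : ℤ, q.2 = FreeGroup.of p.1 ^ e • p.2 := by
  constructor
  · intro hq
    obtain ⟨z', hz'⟩ := QuotientGroup.mk_surjective p'.2
    obtain ⟨y, a, m, m', h1, h2, h3, h4, h5⟩ := h.exists_of_rep z' hz'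
    obtain ⟨w, b, n, n', k1, k2, k3, k4, k5⟩ := hq.exists_of_rep z' hz'
    have e1 : α (a ^ n') = α (b ^ m') := by
      apply apply_eq_of_ker_eq hker.symm
      rw [map_zpow, map_zpow, h5, k5, conj_zpow_aux, conj_zpow_aux, mul_comm]
    rw [map_zpow, map_zpow, h4, k4, conj_zpow_aux, conj_zpow_aux] at e1
    obtain ⟨e2, -, e, e3⟩ := freeGroup_conj_zpow_eq' (mul_ne_zero h1 k2) e1
    refine ⟨e2.symm, e, ?_⟩
    rw [← k3, e3, ← h3]; rfl
  · rintro ⟨h1, e, h2⟩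
    obtain ⟨y, y', a, m, m', h3, h4, h5, h6, h7, h8⟩ := h
    refine ⟨FreeGroup.of p.1 ^ e * y, y', a, m, m', h3, h4, ?_, h6, ?_, h8⟩
    · rw [h2, ← h5]; rfl
    · rw [h7, h1]; group

/-- The length of the circle through a coset labelled by a basis element. -/
noncomputable def circleLength (R : Subgroup (FreeGroup B)) (p : B × (FreeGroup B ⧸ R)) : ℕ :=
  Function.minimalPeriod (FreeGroup.of p.1 • ·) p.2

theorem circleLength_pos (R : Subgroup (FreeGroup B)) [R.FiniteIndex]
    (p : B × (FreeGroup B ⧸ R)) : 0 < circleLength R p := by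
  apply Function.minimalPeriod_pos_of_mem_periodicPts
  exact Function.Injective.mem_periodicPts (MulAction.injective _) _

theorem circleLength_dvd (R : Subgroup (FreeGroup B)) (s : B) (y : FreeGroup B) (n : ℤ) :
    y⁻¹ * FreeGroup.of s ^ n * y ∈ R ↔ (circleLength R (s, (y : _ ⧸ R)) : ℤ) ∣ n := by
  unfold circleLength
  rw [← MulAction.zpow_smul_eq_iff_minimalPeriod_dvd, eq_comm, MulAction.Quotient.smul_coe,
    QuotientGroup.eq, smul_eq_mul, mul_assoc]

open Classical in
/-- The number of pairs related to `p'` is the length of the corresponding circle. -/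
theorem AxisRel.card [α.range.FiniteIndex] (hker : α.ker = α'.ker) {S : Finset B}
    [Fintype (FreeGroup B ⧸ α.range)]
    {p : B × (FreeGroup B ⧸ α.range)} {p' : B' × (FreeGroup B' ⧸ α'.range)}
    (hp : p.1 ∈ S) (h : AxisRel α α' p p') :
    ((S ×ˢ Finset.univ).filter (fun q : B × (FreeGroup B ⧸ α.range) => AxisRel α α' q p')).card
      = circleLength α.range p := by
  have e : ((S ×ˢ Finset.univ).filter (fun q : B × (FreeGroup B ⧸ α.range) => AxisRel α α' q p'))
      = (MulAction.orbit (Subgroup.zpowers (FreeGroup.of p.1)) p.2).toFinset.image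
        (fun x => (p.1, x)) := by
    ext q
    simp only [Finset.mem_filter, Finset.mem_product, Finset.mem_univ, and_true,
      h.iff_orbit hker, Finset.mem_image, Set.mem_toFinset]
    constructor
    · rintro ⟨-, h1, e, h2⟩
      exact ⟨q.2, ⟨⟨_, e, rfl⟩, h2.symm⟩, Prod.ext h1.symm rfl⟩
    · rintro ⟨x, ⟨⟨_, e, rfl⟩, rfl⟩, rfl⟩
      exact ⟨hp, rfl, e, rfl⟩
  rw [e, Finset.card_image_of_injective _ (Prod.mk_right_injective p.1), Set.toFinset_card]
  exact (MulAction.minimalPeriod_eq_card (FreeGroup.of p.1) p.2).symm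

/-- If the circle `p` has all its powers stretched by the factor `L`, the related circles are `L`
times as long. -/
theorem AxisRel.length_eq [α.range.FiniteIndex] [α'.range.FiniteIndex]
    (hker : α.ker = α'.ker)
    {p : B × (FreeGroup B ⧸ α.range)} {p' : B' × (FreeGroup B' ⧸ α'.range)}
    (h : AxisRel α α' p p') (L : ℚ) (y : FreeGroup B) (hy : (y : _ ⧸ α.range) = p.2)
    (hp : ∀ a (m : ℤ), m ≠ 0 → α a = y⁻¹ * FreeGroup.of p.1 ^ m * y →
      ∃ (y' : FreeGroup B') (s' : B') (m' : ℤ), α' a = y'⁻¹ * FreeGroup.of s' ^ m' * y' ∧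
        (|m'| : ℚ) = L * |m|) :
    (circleLength α'.range p' : ℚ) = L * circleLength α.range p := by
  obtain ⟨y', a, m', m, h1, h2, h3, h4, h5⟩ := h.symm.exists_of_rep y hy
  have μ0 := circleLength_pos α.range p
  have μ0' := circleLength_pos α'.range p'
  have hμ : y⁻¹ * FreeGroup.of p.1 ^ (circleLength α.range p : ℤ) * y ∈ α.range := by
    rw [circleLength_dvd, hy]
  obtain ⟨a₁, ha₁⟩ := hμ
  obtain ⟨y₁, s₁, m₁, k1, k2⟩ := hp a₁ _ (by exact_mod_cast μ0.ne') ha₁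
  have e1 : α' (a ^ (circleLength α.range p : ℤ)) = α' (a₁ ^ m) := by
    apply apply_eq_of_ker_eq hker
    rw [map_zpow, map_zpow, h5, ha₁, conj_zpow_aux, conj_zpow_aux, mul_comm]
  rw [map_zpow, map_zpow, h4, k1, conj_zpow_aux, conj_zpow_aux] at e1
  have μ0z : (circleLength α.range p : ℤ) ≠ 0 := by exact_mod_cast μ0.ne'
  obtain ⟨e2, e3, e, e4⟩ := freeGroup_conj_zpow_eq' (mul_ne_zero h1 μ0z) e1
  have k1' : α' a₁ = y'⁻¹ * FreeGroup.of p'.1 ^ m₁ * y' := by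
    rw [k1, e4, ← e2]; group
  have d1 : (circleLength α'.range p' : ℤ) ∣ m₁ := by
    have : y'⁻¹ * FreeGroup.of p'.1 ^ m₁ * y' ∈ α'.range := ⟨a₁, k1'⟩
    rwa [circleLength_dvd, h3] at this
  have m₁0 : m₁ ≠ 0 := by
    rintro rfl
    rw [zero_mul] at e3
    exact mul_ne_zero h1 μ0z e3
  -- a preimage of the full circle through `p'` is a power of `a₁` up to the kernel
  have d2 : m₁ ∣ (circleLength α'.range p' : ℤ) := by
    have : y'⁻¹ * FreeGroup.of p'.1 ^ (circleLength α'.range p' : ℤ) * y' ∈ α'.range := by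
      rw [circleLength_dvd, h3]
    obtain ⟨a₂, ha₂⟩ := this
    have f1 : α (a₂ ^ m₁) = α (a₁ ^ (circleLength α'.range p' : ℤ)) := by
      apply apply_eq_of_ker_eq hker.symm
      rw [map_zpow, map_zpow, ha₂, k1', conj_zpow_aux, conj_zpow_aux, mul_comm]
    rw [map_zpow, map_zpow, ha₁, conj_zpow_aux] at f1
    -- `α a₂` commutes with a power of a conjugate of a basis element, hence is such a power itself
    have f2 : Commute (y * α a₂ * y⁻¹) (FreeGroup.of p.1 ^ ((circleLength α.range p : ℤ)
        * (circleLength α'.range p' : ℤ))) := by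
      have : Commute (α a₂) (y⁻¹ * FreeGroup.of p.1 ^ ((circleLength α.range p : ℤ)
        * (circleLength α'.range p' : ℤ)) * y) := by
        rw [← f1]; exact Commute.self_zpow _ _
      have h9 := this.map (MulAut.conj y).toMonoidHom
      simpa [mul_assoc] using h9
    obtain ⟨n, hn⟩ := freeGroup_eq_zpow_of_commute
      (mul_ne_zero μ0z (by exact_mod_cast μ0'.ne')) f2
    have f3 : α a₂ = y⁻¹ * FreeGroup.of p.1 ^ n * y := by rw [← hn]; group
    have f4 : (circleLength α.range p : ℤ) ∣ n := by
      have : y⁻¹ * FreeGroup.of p.1 ^ n * y ∈ α.range := ⟨a₂, f3⟩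
      rwa [circleLength_dvd, hy] at this
    obtain ⟨t, rfl⟩ := f4
    have f5 : α' a₂ = α' (a₁ ^ t) := by
      apply apply_eq_of_ker_eq hker
      rw [map_zpow, f3, ha₁, conj_zpow_aux]
    rw [map_zpow, ha₂, k1', conj_zpow_aux] at f5
    obtain ⟨-, f6, -⟩ := freeGroup_conj_zpow_eq' (by exact_mod_cast μ0'.ne') f5
    exact ⟨t, f6⟩
  have d3 : |m₁| = (circleLength α'.range p' : ℤ) := by
    apply Int.dvd_antisymm (abs_nonneg _) (by positivity)
    · rwa [abs_dvd]
    · rwa [dvd_abs]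
  have d4 : (|m₁| : ℚ) = (circleLength α'.range p' : ℚ) := by exact_mod_cast d3
  rw [← d4, k2]
  simp

/-- Weighted double counting of a relation whose fibres have prescribed sizes: every `p` contributes
`1 / μ p` to each `p'` related to it, hence `μ' p' / μ p = L p` in total, and every `p'` receives
`1` in total. -/
theorem sum_eq_card_of_fibres {P P' : Type*} (s : Finset P) (s' : Finset P') (r : P → P' → Prop)
    [∀ p p', Decidable (r p p')]
    (L : P → ℚ) (μ : P → ℚ) (μ' : P' → ℚ) (hμ' : ∀ p' ∈ s', 0 < μ' p')
    (h1 : ∀ p ∈ s, ∃ p' ∈ s', r p p') (h2 : ∀ p' ∈ s', ∃ p ∈ s, r p p')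
    (c1 : ∀ p ∈ s, ∀ p' ∈ s', r p p' → ((s.filter (fun q => r q p')).card : ℚ) = μ p)
    (c2 : ∀ p ∈ s, ∀ p' ∈ s', r p p' → ((s'.filter (fun q' => r p q')).card : ℚ) = μ' p')
    (hL : ∀ p ∈ s, ∀ p' ∈ s', r p p' → μ' p' = L p * μ p) :
    ∑ p ∈ s, L p = s'.card := by
  have e1 : ∀ p ∈ s, L p = ∑ p' ∈ s', if r p p' then 1 / μ p else 0 := by
    intro p hp
    obtain ⟨q', hq', hr⟩ := h1 p hp
    rw [← Finset.sum_filter, Finset.sum_const, nsmul_eq_mul, c2 p hp q' hq' hr, hL p hp q' hq' hr]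
    have : μ p ≠ 0 := by
      intro h0
      have := hμ' q' hq'
      rw [hL p hp q' hq' hr, h0] at this
      simp at this
    field_simp
  have e2 : ∀ p' ∈ s', (∑ p ∈ s, if r p p' then 1 / μ p else 0) = 1 := by
    intro p' hp'
    rw [← Finset.sum_filter]
    obtain ⟨p, hp, hr⟩ := h2 p' hp'
    have : ∀ q ∈ s.filter (fun q => r q p'), 1 / μ q = 1 / μ p := by
      intro q hq
      obtain ⟨h3, h4⟩ := Finset.mem_filter.1 hq
      rw [← c1 q h3 p' hp' h4, ← c1 p hp p' hp' hr]
    rw [Finset.sum_congr rfl this, Finset.sum_const, nsmul_eq_mul, c1 p hp p' hp' hr]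
    have : μ p ≠ 0 := by
      intro h0
      have := hμ' p' hp'
      rw [hL p hp p' hp' hr, h0] at this
      simp at this
    field_simp
  rw [Finset.sum_congr rfl e1, Finset.sum_comm, Finset.sum_congr rfl e2]
  simp

/-- If the conjugates of powers of basis elements in `S` correspond under `α` and `α'` to those in
`S'`, stretched by the factors `L`, then the sum of `L s` over the elements `s` of `S` and the
vertices of the cover given by `α.range` is `S'.card` times the number of vertices of the other
cover. Indeed corresponding circles have lengths in the ratio `L`, and summing the reciprocal of the
length over the vertices of a circle counts the circle once. -/
theorem sum_stretch_eq [α.range.FiniteIndex] [α'.range.FiniteIndex] (hker : α.ker = α'.ker)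
    [Fintype (FreeGroup B ⧸ α.range)]
    (S : Finset B) (S' : Finset B') (L : B → FreeGroup B → ℚ)
    (hp : ∀ a y, ∀ s ∈ S, ∀ m : ℤ, m ≠ 0 → α a = y⁻¹ * FreeGroup.of s ^ m * y →
      ∃ (y' : FreeGroup B'), ∃ s' ∈ S', ∃ (m' : ℤ), α' a = y'⁻¹ * FreeGroup.of s' ^ m' * y' ∧
        (|m'| : ℚ) = L s y * |m|)
    (hp' : ∀ a y', ∀ s' ∈ S', ∀ m' : ℤ, m' ≠ 0 → α' a = y'⁻¹ * FreeGroup.of s' ^ m' * y' →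
      ∃ (y : FreeGroup B), ∃ s ∈ S, ∃ (m : ℤ), α a = y⁻¹ * FreeGroup.of s ^ m * y) :
    ∑ s ∈ S, ∑ q : FreeGroup B ⧸ α.range, L s q.out = S'.card * α'.range.index := by
  classical
  have : Fintype (FreeGroup B' ⧸ α'.range) := Fintype.ofFinite _
  rw [← Finset.sum_product']
  rw [sum_eq_card_of_fibres (S ×ˢ Finset.univ)
    (S' ×ˢ (Finset.univ : Finset (FreeGroup B' ⧸ α'.range)))
    (AxisRel α α') (fun p => L p.1 p.2.out) (fun p => circleLength α.range p)
    (fun p' => circleLength α'.range p')]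
  · rw [Finset.card_product, Finset.card_univ, Subgroup.index, Nat.card_eq_fintype_card]
    push_cast; rfl
  · intro p' _; exact_mod_cast circleLength_pos _ _
  · rintro ⟨s, q⟩ hs
    have hs := (Finset.mem_product.1 hs).1
    have hμ : q.out⁻¹ * FreeGroup.of s ^ (circleLength α.range (s, q) : ℤ) * q.out ∈ α.range := by
      rw [circleLength_dvd, QuotientGroup.out_eq']
    have h0 : (circleLength α.range (s, q) : ℤ) ≠ 0 := by
      exact_mod_cast (circleLength_pos _ _).ne'
    obtain ⟨a, ha⟩ := hμ
    obtain ⟨y', s', hs', m', h1, -⟩ := hp a q.out s hs _ h0 ha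
    exact ⟨(s', (y' : _ ⧸ α'.range)), by simp [hs'], q.out, y', a, _, m', h0,
      exponent_ne_zero hker h0 ha h1, QuotientGroup.out_eq' q, rfl, ha, h1⟩
  · rintro ⟨s', q'⟩ hs
    have hs := (Finset.mem_product.1 hs).1
    have hμ : q'.out⁻¹ * FreeGroup.of s' ^ (circleLength α'.range (s', q') : ℤ) * q'.out
        ∈ α'.range := by
      rw [circleLength_dvd, QuotientGroup.out_eq']
    have h0 : (circleLength α'.range (s', q') : ℤ) ≠ 0 := by
      exact_mod_cast (circleLength_pos _ _).ne'
    obtain ⟨a, ha⟩ := hμ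
    obtain ⟨y, s, hs', m, h1⟩ := hp' a q'.out s' hs _ h0 ha
    exact ⟨(s, (y : _ ⧸ α.range)), by simp [hs'], y, q'.out, a, m, _,
      exponent_ne_zero hker.symm h0 ha h1, h0, rfl, QuotientGroup.out_eq' q', h1, ha⟩
  · intro p hp p' hp' h
    exact_mod_cast AxisRel.card hker (Finset.mem_product.1 hp).1 h
  · intro p hp p' hp' h
    have := AxisRel.card hker.symm (Finset.mem_product.1 hp').1 h.symm
    simp only [AxisRel.comm (α := α') (α' := α)] at this
    exact_mod_cast this
  · intro p hps p' hp' h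
    refine h.length_eq hker _ p.2.out (QuotientGroup.out_eq' _) ?_
    intro a m hm ha
    obtain ⟨y', s', -, m', h1, h2⟩ := hp a _ _ (Finset.mem_product.1 hps).1 m hm ha
    exact ⟨y', s', m', h1, h2⟩

end

/-! ### The model group -/

section Model
variable (k : ℕ) (d : Fin k → ℕ)

/-- The group `ℤ × F_k` generated by the center and the pivots. -/
abbrev CoreGroup : Type := Multiplicative ℤ × FreeGroup (Fin k)

variable {k}

/-- The pivot generators. -/
def pivotElt (i : Fin k) : CoreGroup k := (1, FreeGroup.of i)

/-- The conjugates of the leaf generators by `ℤ × F_k`. The elements of `ℤ × F_k` commuting with a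
leaf generator are the powers of its pivot, so the conjugates of the leaf `s` of the pivot `i` are
indexed by cosets. -/
def LeafConj : Type := Σ i : Fin k, (CoreGroup k ⧸ Subgroup.zpowers (pivotElt i)) × Fin (d i)

/-- The action by conjugation. -/
instance : MulAction (CoreGroup k) (LeafConj d) where
  smul g y := ⟨y.1, g • y.2.1, y.2.2⟩
  one_smul y := by
    change (⟨y.1, (1 : CoreGroup k) • y.2.1, y.2.2⟩ : LeafConj d) = y
    rw [one_smul]; rfl
  mul_smul g h y := by
    change (⟨y.1, (g * h) • y.2.1, y.2.2⟩ : LeafConj d) = ⟨y.1, g • h • y.2.1, y.2.2⟩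
    rw [mul_smul]

variable {d}

/-- The conjugate of the leaf generator `(i, s)` by `g`. -/
def leafConj (i : Fin k) (g : CoreGroup k) (s : Fin (d i)) : LeafConj d := ⟨i, (g, s)⟩

theorem smul_leafConj (h : CoreGroup k) (i : Fin k) (g : CoreGroup k) (s : Fin (d i)) :
    h • leafConj i g s = leafConj i (h * g) s := rfl

theorem leafConj_eq_iff (i : Fin k) (g h : CoreGroup k) (s : Fin (d i)) :
    leafConj i g s = leafConj i h s ↔ g⁻¹ * h ∈ Subgroup.zpowers (pivotElt i) := by
  rw [← QuotientGroup.eq]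
  constructor
  · intro h
    have h1 := eq_of_heq (Sigma.mk.inj h).2
    exact (Prod.mk.inj h1).1
  · intro h
    unfold leafConj
    rw [h]

theorem exists_leafConj (y : LeafConj d) : ∃ i g s, y = leafConj i g s := by
  obtain ⟨i, q, s⟩ := y
  obtain ⟨g, rfl⟩ := QuotientGroup.mk_surjective q
  exact ⟨i, g, s, rfl⟩

variable (d)

/-- The action of `ℤ × F_k` on the free group on the conjugates of the leaf generators. -/
def leafAut : CoreGroup k →* MulAut (FreeGroup (LeafConj d)) where
  toFun g := FreeGroup.freeGroupCongr (MulAction.toPerm g)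
  map_one' := by
    ext f
    induction f using FreeGroup.induction_on with
    | C1 => simp
    | of y => simp
    | inv_of y ih => simp
    | mul a b ha hb => rw [map_mul, map_mul, ha, hb]
  map_mul' g h := by
    ext f
    induction f using FreeGroup.induction_on with
    | C1 => simp
    | of y => simp [mul_smul]
    | inv_of y ih => simpa using ih
    | mul a b ha hb => rw [map_mul, map_mul, ha, hb]

/-- A model of the right-angled Artin group of a tree of diameter four as a split extension of
`ℤ × F_k` by the free group on the conjugates of the leaf generators. -/
abbrev TreeModel : Type := FreeGroup (LeafConj d) ⋊[leafAut d] CoreGroup k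

variable {d}

theorem leafAut_of (g : CoreGroup k) (y : LeafConj d) :
    leafAut d g (FreeGroup.of y) = FreeGroup.of (g • y) := by
  simp [leafAut]

theorem leafAut_mk (g : CoreGroup k) (y : LeafConj d) (b : Bool) :
    leafAut d g (FreeGroup.mk [(y, b)]) = FreeGroup.mk [(g • y, b)] := by
  simp [leafAut]

theorem smul_eq_of_leafAut {g : CoreGroup k} {f : FreeGroup (LeafConj d)} [DecidableEq (LeafConj d)]
    (h : leafAut d g f = f) : ∀ p ∈ f.toWord, g • p.1 = p.1 :=
  freeGroup_map_fixed (MulAction.toPerm g) h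

/-- A core element fixing a leaf conjugate is a conjugate of a power of a pivot. -/
theorem eq_conj_pivot_of_fix {γ : CoreGroup k} {y : LeafConj d} (h : γ • y = y) :
    ∃ i g s, y = leafConj i g s ∧ ∃ a : ℤ, γ = g * pivotElt i ^ a * g⁻¹ := by
  obtain ⟨i, g, s, rfl⟩ := exists_leafConj y
  rw [smul_leafConj, eq_comm, leafConj_eq_iff] at h
  obtain ⟨a, ha⟩ := h
  refine ⟨i, g, s, rfl, a, ?_⟩
  simp only at ha
  rw [ha]; group

/-- The generators of the core: the center is indexed by `none`. -/
def coreGen : Option (Fin k) → CoreGroup k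
  | none => (Multiplicative.ofAdd 1, 1)
  | some i => pivotElt i

/-- The centre and the pivots, as elements of the model. -/
def modelGen (d : Fin k → ℕ) (i : Option (Fin k)) : TreeModel d := SemidirectProduct.inr (coreGen i)

/-- The leaf generators, as elements of the model. -/
def modelLeaf {i : Fin k} (s : Fin (d i)) : TreeModel d :=
  SemidirectProduct.inl (FreeGroup.of (leafConj i 1 s))

/-- The exponent sums of the centre and of the pivots. -/
def modelExp (d : Fin k → ℕ) : Option (Fin k) → TreeModel d →* Multiplicative ℤ
  | none => (MonoidHom.fst _ _).comp SemidirectProduct.rightHom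
  | some i => ((FreeGroup.lift fun j => if j = i then Multiplicative.ofAdd 1 else 1).comp
      (MonoidHom.snd _ _)).comp SemidirectProduct.rightHom

theorem modelExp_gen (i j : Option (Fin k)) :
    modelExp d i (modelGen d j) = if j = i then Multiplicative.ofAdd 1 else 1 := by
  cases i <;> cases j <;> simp [modelExp, modelGen, coreGen, pivotElt]

theorem modelExp_leaf (i : Option (Fin k)) {j : Fin k} (s : Fin (d j)) :
    modelExp d i (modelLeaf s) = 1 := by
  cases i <;> simp [modelExp, modelLeaf]

theorem modelGen_comm_none (i : Fin k) : Commute (modelGen d none) (modelGen d (some i)) := by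
  unfold modelGen
  apply Commute.map
  simp [coreGen, pivotElt, commute_iff_eq]

theorem inr_mul_leaf (g h : CoreGroup k) (i : Fin k) (s : Fin (d i)) :
    (SemidirectProduct.inr g * SemidirectProduct.inl (FreeGroup.of (leafConj i h s)) *
      (SemidirectProduct.inr g)⁻¹ : TreeModel d)
      = SemidirectProduct.inl (FreeGroup.of (leafConj i (g * h) s)) := by
  rw [← smul_leafConj, ← leafAut_of, SemidirectProduct.inl_aut, map_inv]

theorem modelGen_comm_leaf {i : Fin k} (s : Fin (d i)) :
    Commute (modelGen d (some i)) (modelLeaf s) := by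
  rw [commute_iff_eq, ← mul_inv_eq_iff_eq_mul]
  unfold modelGen modelLeaf
  rw [inr_mul_leaf]
  congr 2
  rw [leafConj_eq_iff, mul_one, mul_one, inv_mem_iff]
  exact Subgroup.mem_zpowers _

/-- The action on the Cayley tree of the free part: the free part acts by left translations and
`ℤ × F_k` by permuting the basis. -/
instance : MulAction (TreeModel d) (FreeGroup (LeafConj d)) where
  smul g h := g.left * leafAut d g.right h
  one_smul h := by
    change (1 : FreeGroup (LeafConj d)) * leafAut d 1 h = h
    simp
  mul_smul g g' h := by
    change (g * g').left * leafAut d (g * g').right h =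
      g.left * leafAut d g.right (g'.left * leafAut d g'.right h)
    simp [mul_assoc]

theorem model_smul (g : TreeModel d) (h : FreeGroup (LeafConj d)) :
    g • h = g.left * leafAut d g.right h := rfl

theorem norm_leafAut [DecidableEq (LeafConj d)] (g : CoreGroup k) (f : FreeGroup (LeafConj d)) :
    (leafAut d g f).norm = f.norm := by
  have key : ∀ (g : CoreGroup k) (f : FreeGroup (LeafConj d)), (leafAut d g f).norm ≤ f.norm := by
    intro g f
    conv_lhs => rw [← FreeGroup.mk_toWord (x := f)]
    have : leafAut d g (FreeGroup.mk f.toWord)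
        = FreeGroup.mk (f.toWord.map fun p => (g • p.1, p.2)) := by
      simp [leafAut]
    rw [this]
    refine FreeGroup.norm_mk_le.trans ?_
    simp [FreeGroup.norm]
  refine le_antisymm (key g f) ?_
  have := key g⁻¹ (leafAut d g f)
  rwa [map_inv, MulAut.inv_apply_self] at this

theorem model_isometric [DecidableEq (LeafConj d)] (g : TreeModel d)
    (u v : FreeGroup (LeafConj d)) : fgDist (g • u) (g • v) = fgDist u v := by
  unfold fgDist
  rw [model_smul, model_smul, mul_inv_rev, mul_assoc, inv_mul_cancel_left, ← map_inv, ← map_mul,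
    norm_leafAut]

theorem eq_inr_of_fix_one {g : TreeModel d} (h : g • (1 : FreeGroup (LeafConj d)) = 1) :
    g = SemidirectProduct.inr g.right := by
  rw [model_smul, map_one, mul_one] at h
  exact SemidirectProduct.ext (by simpa using h) rfl

theorem inl_smul (u v : FreeGroup (LeafConj d)) :
    (SemidirectProduct.inl u : TreeModel d) • v = u * v := by
  simp [model_smul]

theorem conj_fix {g : TreeModel d} {v : FreeGroup (LeafConj d)} (h : g • v = v) :
    ((SemidirectProduct.inl v)⁻¹ * g * SemidirectProduct.inl v : TreeModel d)
      • (1 : FreeGroup (LeafConj d)) = 1 := by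
  rw [mul_smul, mul_smul, inl_smul, mul_one, h, inv_smul_eq_iff, inl_smul, mul_one]

/-- The free part of an element commuting with a core element `γ` is fixed by `γ`, hence supported
on the leaf conjugates fixed by `γ`. -/
theorem left_of_commute_inr {g : TreeModel d} {γ : CoreGroup k}
    (h : Commute g (SemidirectProduct.inr γ)) :
    leafAut d γ g.left = g.left ∧ Commute g.right γ := by
  have h1 := congrArg SemidirectProduct.left h.eq
  have h2 := congrArg SemidirectProduct.right h.eq
  simp at h1 h2
  exact ⟨h1.symm, h2⟩

theorem left_eq_one_of_no_fix {γ : CoreGroup k} (hγ : ∀ y : LeafConj d, γ • y ≠ y)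
    {f : FreeGroup (LeafConj d)} (h : leafAut d γ f = f) : f = 1 := by
  classical
  by_contra hf
  rw [← FreeGroup.toWord_eq_nil_iff] at hf
  obtain ⟨p, t, hp⟩ := List.exists_cons_of_ne_nil hf
  exact hγ p.1 (smul_eq_of_leafAut h p (by simp [hp]))

/-- An element of the model whose centralizer is not abelian is conjugate to a power of the centre
or of a pivot. -/
theorem model_special {g h₁ h₂ : TreeModel d} (hg : g ≠ 1) (c₁ : Commute h₁ g) (c₂ : Commute h₂ g)
    (hh : ¬ Commute h₁ h₂) :
    ∃ x i, ∃ a : ℤ, a ≠ 0 ∧ g = x * modelGen d i ^ a * x⁻¹ := by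
  classical
  by_cases hfix : ∃ v : FreeGroup (LeafConj d), g • v = v
  -- up to conjugation `g` lies in the core; if it fixes no leaf conjugate, its centralizer lies in
  -- the core as well, and is non-commutative only for powers of the centre
  · obtain ⟨v, hv⟩ := hfix
    set x : TreeModel d := SemidirectProduct.inl v with hx
    have h1 := eq_inr_of_fix_one (conj_fix hv)
    set γ := (x⁻¹ * g * x).right with hγ
    have hgx : g = x * SemidirectProduct.inr γ * x⁻¹ := by rw [← h1, ← hx]; group
    suffices ∃ x' i, ∃ a : ℤ, SemidirectProduct.inr γ = x' * modelGen d i ^ a * x'⁻¹ by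
      obtain ⟨x', i, a, h⟩ := this
      refine ⟨x * x', i, a, ?_, by rw [hgx, h]; group⟩
      rintro rfl
      apply hg
      rw [hgx, h]; group
    by_cases hy : ∃ y : LeafConj d, γ • y = y
    · obtain ⟨y, hy⟩ := hy
      obtain ⟨i, δ, -, -, a, ha⟩ := eq_conj_pivot_of_fix hy
      refine ⟨SemidirectProduct.inr δ, some i, a, ?_⟩
      rw [ha, map_mul, map_mul, map_inv, map_zpow]; rfl
    · push Not at hy
      have key : ∀ h, Commute h g → x⁻¹ * h * x = SemidirectProduct.inr (x⁻¹ * h * x).right ∧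
          Commute (x⁻¹ * h * x).right γ := by
        intro h hc
        have hc' : Commute (x⁻¹ * h * x) (SemidirectProduct.inr γ) := by
          rw [← h1]
          have := hc.map (MulAut.conj x⁻¹).toMonoidHom
          simpa using this
        obtain ⟨e1, e2⟩ := left_of_commute_inr hc'
        exact ⟨SemidirectProduct.ext (by simpa using left_eq_one_of_no_fix hy e1) rfl, e2⟩
      obtain ⟨e1, f1⟩ := key h₁ c₁
      obtain ⟨e2, f2⟩ := key h₂ c₂
      have hw : γ.2 = 1 := by
        by_contra hw
        have := freeGroup_commute_trans hw (f1.map (MonoidHom.snd _ _)) (f2.map (MonoidHom.snd _ _))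
        have h3 : Commute (x⁻¹ * h₁ * x).right (x⁻¹ * h₂ * x).right :=
          Prod.ext (mul_comm _ _) this
        have h4 := h3.map (SemidirectProduct.inr : CoreGroup k →* TreeModel d)
        rw [← e1, ← e2] at h4
        have h5 := h4.map (MulAut.conj x).toMonoidHom
        apply hh
        simpa [mul_assoc] using h5
      refine ⟨1, none, Multiplicative.toAdd γ.1, ?_⟩
      have : γ = coreGen none ^ (Multiplicative.toAdd γ.1) := by
        refine Prod.ext ?_ ?_
        · simp [coreGen, ← ofAdd_zsmul]
        · simp [coreGen, hw]
      conv_lhs => rw [this]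
      rw [map_zpow, one_mul, inv_one, mul_one]; rfl
  -- a fixed-point-free `g` has a commutative centralizer: the commutator of `h₁` and `h₂` fixes an
  -- edge, so it is conjugate to a power of a pivot, and its exponent sums vanish
  · exfalso
    push Not at hfix
    apply hh
    obtain ⟨u, w, huw, e1, e2⟩ := isTreeDist_fgDist.commutator_fixes_edge
      model_isometric g hfix h₁ h₂ c₁ c₂
    set κ : TreeModel d := (h₂ * h₁)⁻¹ * (h₁ * h₂) with hκ
    have hu : κ • u = u := by rw [hκ, mul_smul, e1, inv_smul_smul]
    have hw : κ • w = w := by rw [hκ, mul_smul, e2, inv_smul_smul]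
    obtain ⟨⟨y, b⟩, hs⟩ := letter_of_norm_one huw
    obtain rfl := inv_mul_eq_iff_eq_mul.1 hs
    set x : TreeModel d := SemidirectProduct.inl u with hx
    have h1 := eq_inr_of_fix_one (conj_fix hu)
    rw [← hx] at h1
    set γ := (x⁻¹ * κ * x).right with hγ
    have h2 : γ • y = y := by
      have h3 : (x⁻¹ * κ * x) • FreeGroup.mk [(y, b)] = FreeGroup.mk [(y, b)] := by
        rw [mul_smul, mul_smul, hx, inl_smul, hw, inv_smul_eq_iff, inl_smul]
      rw [h1, model_smul, SemidirectProduct.left_inr, SemidirectProduct.right_inr, one_mul,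
        leafAut_mk] at h3
      have h4 := congrArg FreeGroup.toWord h3
      rw [norm_letter, norm_letter] at h4
      simpa using h4
    obtain ⟨i, δ, -, -, a, ha⟩ := eq_conj_pivot_of_fix h2
    have hκγ : κ = x * SemidirectProduct.inr γ * x⁻¹ := by rw [← h1]; group
    have e3 : modelExp d (some i) κ = 1 := by
      rw [hκ, map_mul, map_inv, map_mul, map_mul, mul_comm (modelExp d (some i) h₁),
        inv_mul_cancel]
    have e4 : modelExp d (some i) κ = Multiplicative.ofAdd 1 ^ a := by
      have : κ = (x * SemidirectProduct.inr δ) * modelGen d (some i) ^ a *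
          (x * SemidirectProduct.inr δ)⁻¹ := by
        rw [hκγ, ha, map_mul, map_mul, map_inv, map_zpow]
        simp only [modelGen, coreGen]
        group
      rw [this, map_mul, map_mul, map_inv, mul_right_comm, mul_inv_cancel, one_mul, map_zpow,
        modelExp_gen, if_pos rfl]
    have ha0 : a = 0 := by
      rw [e3, ← ofAdd_zsmul] at e4
      simpa using congrArg Multiplicative.toAdd e4.symm
    have : κ = 1 := by rw [hκγ, ha, ha0]; simp
    rw [hκ, inv_mul_eq_one] at this
    exact this.symm

end Model

/-! ### Links of vertices -/

section Link
variable {k : ℕ}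

/-- The link of the centre (`none`) or of a pivot (`some i`) in the tree: the centre is adjacent to
the pivots, a pivot is adjacent to the centre and to its leaves. -/
def LinkBasis (d : Fin k → ℕ) : Option (Fin k) → Type
  | none => Fin k
  | some i => Option (Fin (d i))

instance (d : Fin k → ℕ) : ∀ i, Fintype (LinkBasis d i)
  | none => inferInstanceAs (Fintype (Fin k))
  | some i => inferInstanceAs (Fintype (Option (Fin (d i))))

instance (d : Fin k → ℕ) : ∀ i, DecidableEq (LinkBasis d i)
  | none => inferInstanceAs (DecidableEq (Fin k))
  | some i => inferInstanceAs (DecidableEq (Option (Fin (d i))))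

/-- The centre, as a link vertex of a pivot. -/
def linkCenter (d : Fin k → ℕ) (i : Fin k) : LinkBasis d (some i) := (none : Option (Fin (d i)))

/-- A pivot, as a link vertex of the centre. -/
def linkPivot (d : Fin k → ℕ) (j : Fin k) : LinkBasis d none := j

/-- A leaf, as a link vertex of its pivot. -/
def linkLeaf {d : Fin k → ℕ} {i : Fin k} (s : Fin (d i)) : LinkBasis d (some i) :=
  (some s : Option (Fin (d i)))

theorem link_cases {d : Fin k → ℕ} {i : Fin k} (b : LinkBasis d (some i)) :
    b = linkCenter d i ∨ ∃ s, b = linkLeaf s := by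
  change Option (Fin (d i)) at b
  cases b with
  | none => exact Or.inl rfl
  | some s => exact Or.inr ⟨s, rfl⟩

/-- The centre (`some none`) or the pivot (`some (some j)`) that a link vertex is, if it is not a
leaf. -/
def linkVertex (d : Fin k → ℕ) : ∀ i, LinkBasis d i → Option (Option (Fin k))
  | none, j => some (some j)
  | some _, none => some none
  | some _, some _ => none

variable (d : Fin k → ℕ)

/-- The map from the free group on the link of a vertex to the model. By `modelρ_σ` it is injective,
so it is the inclusion of the subgroup generated by the link. -/
def modelσ : ∀ i : Option (Fin k), FreeGroup (LinkBasis d i) →* TreeModel d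
  | none => FreeGroup.lift fun j : Fin k => modelGen d (some j)
  | some i => FreeGroup.lift fun b : Option (Fin (d i)) =>
      match b with
      | none => modelGen d none
      | some s => modelLeaf s

variable {d}

theorem modelσ_none (f : FreeGroup (LinkBasis d none)) :
    modelσ d none f = SemidirectProduct.inr ((1 : Multiplicative ℤ), (f : FreeGroup (Fin k))) := by
  have : modelσ d none = (SemidirectProduct.inr : CoreGroup k →* TreeModel d).comp
      (MonoidHom.inr (Multiplicative ℤ) (FreeGroup (Fin k))) := by
    apply FreeGroup.ext_hom
    intro j
    exact FreeGroup.lift_apply_of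
  rw [this]; rfl

theorem exists_modelσ_none (f : FreeGroup (Fin k)) :
    ∃ f', modelσ d none f' = SemidirectProduct.inr ((1 : Multiplicative ℤ), f) :=
  ⟨f, modelσ_none f⟩

theorem modelσ_some_none (i : Fin k) :
    modelσ d (some i) (FreeGroup.of (linkCenter d i)) = modelGen d none :=
  FreeGroup.lift_apply_of

theorem modelσ_some_some (i : Fin k) (s : Fin (d i)) :
    modelσ d (some i) (FreeGroup.of (linkLeaf s)) = modelLeaf s :=
  FreeGroup.lift_apply_of

theorem modelσ_of {i j : Option (Fin k)} {b : LinkBasis d i} (h : linkVertex d i b = some j) :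
    modelσ d i (FreeGroup.of b) = modelGen d j := by
  cases i with
  | none =>
    obtain rfl := Option.some_inj.1 h
    exact FreeGroup.lift_apply_of
  | some i =>
    rcases link_cases b with rfl | ⟨s, rfl⟩
    · obtain rfl := Option.some_inj.1 h; exact modelσ_some_none i
    · cases h

theorem modelσ_comm (i : Option (Fin k)) (f : FreeGroup (LinkBasis d i)) :
    Commute (modelσ d i f) (modelGen d i) := by
  induction f using FreeGroup.induction_on with
  | C1 => simp
  | of b =>
    cases i with
    | none => rw [modelσ_of (j := some b) rfl]; exact (modelGen_comm_none _).symm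
    | some i =>
      rcases link_cases b with rfl | ⟨s, rfl⟩
      · rw [modelσ_some_none]; exact modelGen_comm_none _
      · rw [modelσ_some_some]; exact (modelGen_comm_leaf _).symm
  | inv_of b ih => rw [map_inv]; exact ih.inv_left
  | mul f g hf hg => rw [map_mul]; exact hf.mul_left hg

/-- The exponent sum of a pivot vanishes on the subgroup generated by the link of any pivot. -/
theorem modelExp_σ_self (i j : Fin k) (f : FreeGroup (LinkBasis d (some j))) :
    modelExp d (some i) (modelσ d (some j) f) = 1 := by
  induction f using FreeGroup.induction_on with
  | C1 => simp
  | of b =>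
    rcases link_cases b with rfl | ⟨s, rfl⟩
    · rw [modelσ_some_none, modelExp_gen]; rfl
    · rw [modelσ_some_some, modelExp_leaf]
  | inv_of b ih => rw [map_inv, map_inv, ih, inv_one]
  | mul f g hf hg => rw [map_mul, map_mul, hf, hg, one_mul]

theorem ofAdd_one_zpow (a : ℤ) : (Multiplicative.ofAdd (1 : ℤ)) ^ a = Multiplicative.ofAdd a := by
  rw [← ofAdd_zsmul]; simp

theorem center_no_fix {a : ℤ} (ha : a ≠ 0) (y : LeafConj d) :
    (coreGen none : CoreGroup k) ^ a • y ≠ y := by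
  intro h
  obtain ⟨i, g, s, -, n, hn⟩ := eq_conj_pivot_of_fix h
  have := congrArg Prod.fst hn
  simp [coreGen, pivotElt, ofAdd_one_zpow] at this
  exact ha this

theorem core_comm_none (i : Fin k) : Commute (coreGen none) (pivotElt i) := by
  simp [coreGen, pivotElt, commute_iff_eq]

/-- The centralizer of a nontrivial power of a vertex generator is generated by this generator and
its link. -/
theorem model_cent {i : Option (Fin k)} {a : ℤ} (ha : a ≠ 0) {g : TreeModel d}
    (h : Commute g (modelGen d i ^ a)) :
    ∃ (b : ℤ) (f : _), g = modelGen d i ^ b * modelσ d i f := by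
  classical
  have h' : Commute g (SemidirectProduct.inr (coreGen i ^ a)) := by rw [map_zpow]; exact h
  obtain ⟨e1, e2⟩ := left_of_commute_inr h'
  cases i with
  | none =>
    have e3 := left_eq_one_of_no_fix (center_no_fix ha) e1
    obtain ⟨f, hf⟩ := exists_modelσ_none (d := d) g.right.2
    refine ⟨Multiplicative.toAdd g.right.1, f, ?_⟩
    rw [hf, modelGen, ← map_zpow, ← map_mul]
    refine SemidirectProduct.ext (by rw [SemidirectProduct.left_inr]; exact e3) ?_
    rw [SemidirectProduct.right_inr]
    refine Prod.ext ?_ ?_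
    · simp [coreGen, ofAdd_one_zpow]
    · simp [coreGen]
  | some i =>
    have hp : ∀ n : ℤ, pivotElt i ^ n = ((1 : Multiplicative ℤ), FreeGroup.of i ^ n) := by
      intro n; exact Prod.ext (by simp [pivotElt]) (by simp [pivotElt])
    -- core elements commuting with a power of the pivot
    have core : ∀ δ : CoreGroup k, Commute δ (pivotElt i ^ a) →
        ∃ b e : ℤ, δ = coreGen none ^ b * pivotElt i ^ e := by
      intro δ hδ
      have h1 := hδ.map (MonoidHom.snd _ _)
      rw [hp] at h1
      obtain ⟨e, he⟩ := freeGroup_eq_zpow_of_commute ha h1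
      refine ⟨Multiplicative.toAdd δ.1, e, ?_⟩
      rw [hp]
      refine Prod.ext ?_ ?_
      · simp [coreGen, ofAdd_one_zpow]
      · simpa [coreGen] using he
    have hcs : ∀ b : ℤ, modelσ d (some i) (FreeGroup.of (linkCenter d i) ^ b)
        = SemidirectProduct.inr (coreGen none ^ b) := by
      intro b
      rw [map_zpow, modelσ_some_none, map_zpow]; rfl
    -- a leaf conjugate fixed by a power of the pivot is a conjugate of one of its leaves by the centre
    have letter : ∀ y : LeafConj d, pivotElt i ^ a • y = y →
        (SemidirectProduct.inl (FreeGroup.of y) : TreeModel d) ∈ (modelσ d (some i)).range := by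
      intro y hy
      obtain ⟨i', δ, s, rfl, n, hn⟩ := eq_conj_pivot_of_fix hy
      have h1 := congrArg Prod.snd hn
      rw [hp] at h1
      simp only [Prod.snd_mul, Prod.snd_inv, pivotElt, Prod.pow_snd] at h1
      have h1' : δ.2⁻¹ * FreeGroup.of i ^ a * δ.2⁻¹⁻¹ = FreeGroup.of i' ^ n := by
        rw [h1]; group
      obtain ⟨rfl, rfl, -⟩ := freeGroup_conj_zpow_eq ha h1'
      obtain ⟨b, e, rfl⟩ := core δ (by
        rw [commute_iff_eq, ← mul_inv_eq_iff_eq_mul]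
        exact hn.symm)
      refine ⟨FreeGroup.of (linkCenter d i) ^ b *
        FreeGroup.of (linkLeaf s) *
        (FreeGroup.of (linkCenter d i) ^ b)⁻¹, ?_⟩
      rw [map_mul, map_mul, map_inv, hcs, modelσ_some_some, modelLeaf, inr_mul_leaf]
      congr 2
      rw [leafConj_eq_iff, mul_one, inv_mul_cancel_left]
      exact Subgroup.zpow_mem_zpowers _ _
    have word : ∀ w : List (LeafConj d × Bool), (∀ p ∈ w, pivotElt i ^ a • p.1 = p.1) →
        (SemidirectProduct.inl (FreeGroup.mk w) : TreeModel d) ∈ (modelσ d (some i)).range := by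
      intro w
      induction w with
      | nil => intro _; rw [← FreeGroup.one_eq_mk, map_one]; exact one_mem _
      | cons p w ih =>
        intro hw
        have h1 := ih fun q hq => hw q (List.mem_cons_of_mem _ hq)
        have h2 := letter p.1 (hw p List.mem_cons_self)
        have h3 : FreeGroup.mk (p :: w) = FreeGroup.mk [p] * FreeGroup.mk w := by
          rw [FreeGroup.mul_mk]; rfl
        rw [h3, map_mul]
        refine mul_mem ?_ h1
        obtain ⟨y, b⟩ := p
        cases b with
        | true => exact h2
        | false =>
          have : FreeGroup.mk [(y, false)] = (FreeGroup.of y)⁻¹ := rfl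
          rw [this, map_inv]
          exact inv_mem h2
    obtain ⟨f, hf⟩ := word g.left.toWord (smul_eq_of_leafAut e1)
    rw [FreeGroup.mk_toWord] at hf
    obtain ⟨b, e, hδ⟩ := core g.right e2
    refine ⟨e, f * FreeGroup.of (linkCenter d i) ^ b, ?_⟩
    rw [map_mul, hcs]
    have c1 := (modelσ_comm (some i) f).zpow_right e
    rw [← mul_assoc, ← c1.eq, hf]
    conv_lhs => rw [← SemidirectProduct.inl_left_mul_inr_right g, hδ]
    rw [mul_assoc]
    congr 1
    rw [modelGen, ← map_zpow, ← map_mul]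
    congr 1
    exact (core_comm_none i |>.zpow_zpow _ _).eq

end Link

/-! ### The presentation of the model group -/

section Presentation
variable {k : ℕ} {d : Fin k → ℕ}

/-- A homomorphism out of the right-angled Artin group of a tree of diameter four, from images of
the centre, the pivots and the leaves. -/
def treeLift {H : Type*} [Group H] (c : H) (p : Fin k → H) (x : ∀ i, Fin (d i) → H)
    (hcp : ∀ i, Commute c (p i)) (hpx : ∀ i s, Commute (p i) (x i s)) :
    RAAG (t4Graph k d (fun _ => 1) 0) →* H :=
  PresentedGroup.toGroup (f := fun v : T4V k d (fun _ => 1) 0 =>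
    match v with
    | .center => c
    | .hair _ => 1
    | .pivot i _ => p i
    | .leaf i _ s => x i s) (by
    have key : ∀ (a b : H), Commute a b → a * b * a⁻¹ * b⁻¹ = 1 := by
      intro a b h
      rw [h.eq]; group
    rintro r ⟨u, v, h, rfl⟩
    rw [t4Graph, SimpleGraph.fromRel_adj] at h
    simp only [map_mul, map_inv, FreeGroup.lift_apply_of]
    apply key
    rcases h with ⟨-, h | h⟩ <;> cases u <;> cases v <;> simp only [t4Adj] at h
    · exact Commute.one_right _
    · exact hcp _
    · obtain ⟨h1, h2⟩ := Sigma.mk.inj h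
      subst h1
      exact hpx _ _
    · exact Commute.one_left _
    · exact (hcp _).symm
    · obtain ⟨h1, h2⟩ := Sigma.mk.inj h
      subst h1
      exact (hpx _ _).symm)

/-- The canonical generators of the centre (`none`) and of the pivots. -/
def raagGen (d : Fin k → ℕ) : Option (Fin k) → RAAG (t4Graph k d (fun _ => 1) 0)
  | none => PresentedGroup.of .center
  | some i => PresentedGroup.of (.pivot i 0)

/-- The canonical generators of the leaves. -/
def raagLeaf {i : Fin k} (s : Fin (d i)) : RAAG (t4Graph k d (fun _ => 1) 0) :=
  PresentedGroup.of (.leaf i 0 s)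

section
variable {H : Type*} [Group H] {c : H} {p : Fin k → H} {x : ∀ i, Fin (d i) → H}
    {hcp : ∀ i, Commute c (p i)} {hpx : ∀ i s, Commute (p i) (x i s)}

theorem treeLift_center : treeLift c p x hcp hpx (raagGen d none) = c :=
  PresentedGroup.toGroup.of _

theorem treeLift_pivot (i : Fin k) : treeLift c p x hcp hpx (raagGen d (some i)) = p i :=
  PresentedGroup.toGroup.of _

theorem treeLift_leaf {i : Fin k} (s : Fin (d i)) :
    treeLift c p x hcp hpx (raagLeaf s) = x i s :=
  PresentedGroup.toGroup.of _

end

theorem raag_hom_ext {H : Type*} [Group H] {f g : RAAG (t4Graph k d (fun _ => 1) 0) →* H}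
    (h1 : ∀ i, f (raagGen d i) = g (raagGen d i))
    (h2 : ∀ i (s : Fin (d i)), f (raagLeaf s) = g (raagLeaf s)) : f = g := by
  apply PresentedGroup.ext
  intro v
  cases v with
  | center => exact h1 none
  | hair j => exact j.elim0
  | pivot i j => rw [Subsingleton.elim j 0]; exact h1 (some i)
  | leaf i j s => rw [Subsingleton.elim j 0]; exact h2 i s

theorem raag_commute {u v : T4V k d (fun _ => 1) 0} (h : t4Adj u v) (hne : u ≠ v) :
    Commute (PresentedGroup.of u : RAAG (t4Graph k d (fun _ => 1) 0)) (PresentedGroup.of v) := by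
  have h1 : (PresentedGroup.mk (raagRels (t4Graph k d (fun _ => 1) 0))
      (FreeGroup.of u * FreeGroup.of v * (FreeGroup.of u)⁻¹ * (FreeGroup.of v)⁻¹)) = 1 := by
    apply PresentedGroup.one_of_mem
    exact ⟨u, v, by rw [t4Graph, SimpleGraph.fromRel_adj]; exact ⟨hne, Or.inl h⟩, rfl⟩
  rw [map_mul, map_mul, map_mul, map_inv, map_inv, mul_inv_eq_one, mul_inv_eq_iff_eq_mul] at h1
  exact h1

theorem raagGen_comm (i : Fin k) : Commute (raagGen d none) (raagGen d (some i)) :=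
  raag_commute trivial (by simp)

theorem raagLeaf_comm {i : Fin k} (s : Fin (d i)) :
    Commute (raagGen d (some i)) (raagLeaf s) :=
  raag_commute rfl (by simp)

/-- The canonical map from the right-angled Artin group to the model. -/
def toModel (d : Fin k → ℕ) : RAAG (t4Graph k d (fun _ => 1) 0) →* TreeModel d :=
  treeLift (modelGen d none) (fun i => modelGen d (some i)) (fun _ s => modelLeaf s)
    modelGen_comm_none (fun _ s => modelGen_comm_leaf s)

theorem toModel_gen (i : Option (Fin k)) : toModel d (raagGen d i) = modelGen d i := by
  cases i with
  | none => exact treeLift_center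
  | some i => exact treeLift_pivot i

theorem toModel_leaf {i : Fin k} (s : Fin (d i)) : toModel d (raagLeaf s) = modelLeaf s :=
  treeLift_leaf s

/-- The map from `ℤ × F_k` to the right-angled Artin group given by the centre and the pivots. -/
def fromCore (d : Fin k → ℕ) : CoreGroup k →* RAAG (t4Graph k d (fun _ => 1) 0) :=
  MonoidHom.noncommCoprod (zpowersHom _ (raagGen d none))
    (FreeGroup.lift fun i => raagGen d (some i)) (by
    intro n f
    rw [zpowersHom_apply]
    apply Commute.zpow_left
    induction f using FreeGroup.induction_on with
    | C1 => simp
    | of i => rw [FreeGroup.lift_apply_of]; exact raagGen_comm i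
    | inv_of i ih => rw [map_inv]; exact ih.inv_right
    | mul f g hf hg => rw [map_mul]; exact hf.mul_right hg)

theorem fromCore_gen (i : Option (Fin k)) : fromCore d (coreGen i) = raagGen d i := by
  cases i with
  | none => simp [fromCore, coreGen, zpowersHom_apply]
  | some i => simp [fromCore, coreGen, pivotElt]

theorem core_hom_ext {H : Type*} [Group H] {f g : CoreGroup k →* H}
    (h : ∀ i, f (coreGen i) = g (coreGen i)) : f = g := by
  have h1 : f.comp (MonoidHom.inr (Multiplicative ℤ) (FreeGroup (Fin k)))
      = g.comp (MonoidHom.inr (Multiplicative ℤ) (FreeGroup (Fin k))) := by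
    apply FreeGroup.ext_hom
    intro i
    exact h (some i)
  ext1 x
  have h2 : x = coreGen none ^ (Multiplicative.toAdd x.1)
      * MonoidHom.inr (Multiplicative ℤ) (FreeGroup (Fin k)) x.2 := by
    refine Prod.ext ?_ ?_
    · simp [coreGen, ofAdd_one_zpow]
    · simp [coreGen]
  rw [h2, map_mul, map_mul, map_zpow, map_zpow, h none]
  congr 1
  exact DFunLike.congr_fun h1 x.2

/-- The image in the right-angled Artin group of a conjugate of a leaf generator. It does not depend
on the coset representative, see `fromLeafConj_apply`. -/
noncomputable def fromLeafConj (y : LeafConj d) : RAAG (t4Graph k d (fun _ => 1) 0) :=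
  fromCore d y.2.1.out * raagLeaf y.2.2 * (fromCore d y.2.1.out)⁻¹

theorem fromLeafConj_apply (i : Fin k) (g : CoreGroup k) (s : Fin (d i)) :
    fromLeafConj (leafConj i g s) = fromCore d g * raagLeaf s * (fromCore d g)⁻¹ := by
  have h0 : ((g : CoreGroup k ⧸ Subgroup.zpowers (pivotElt i)).out)⁻¹ * g
      ∈ Subgroup.zpowers (pivotElt i) := by
    rw [← QuotientGroup.eq, QuotientGroup.out_eq']
  obtain ⟨n, hn⟩ := h0
  have h1 : g = (g : CoreGroup k ⧸ Subgroup.zpowers (pivotElt i)).out * coreGen (some i) ^ n := by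
    rw [coreGen]; simp only at hn; rw [hn]; group
  have h2 := ((raagLeaf_comm s).zpow_left n).eq
  conv_rhs => rw [h1, map_mul, map_zpow, fromCore_gen]
  rw [mul_assoc (fromCore d _), h2]
  unfold fromLeafConj leafConj
  group

/-- The inverse of `toModel`. -/
noncomputable def fromModel (d : Fin k → ℕ) :
    TreeModel d →* RAAG (t4Graph k d (fun _ => 1) 0) :=
  SemidirectProduct.lift (FreeGroup.lift fromLeafConj) (fromCore d) (by
    intro g
    apply FreeGroup.ext_hom
    intro y
    obtain ⟨i, h, s, rfl⟩ := exists_leafConj y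
    simp only [MonoidHom.comp_apply, MulEquiv.coe_toMonoidHom, leafAut_of, smul_leafConj,
      FreeGroup.lift_apply_of, fromLeafConj_apply, MulAut.conj_apply, map_mul]
    group)

/-- The right-angled Artin group of a tree of diameter four is isomorphic to the model. -/
noncomputable def raagEquiv (d : Fin k → ℕ) :
    RAAG (t4Graph k d (fun _ => 1) 0) ≃* TreeModel d :=
  MonoidHom.toMulEquiv (toModel d) (fromModel d)
    (by
      apply raag_hom_ext
      · intro i
        rw [MonoidHom.comp_apply, toModel_gen, modelGen, fromModel, SemidirectProduct.lift_inr,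
          fromCore_gen]; rfl
      · intro i s
        rw [MonoidHom.comp_apply, toModel_leaf, modelLeaf, fromModel, SemidirectProduct.lift_inl,
          FreeGroup.lift_apply_of, fromLeafConj_apply]
        simp)
    (by
      have hcore : ∀ g, toModel d (fromCore d g) = SemidirectProduct.inr g := by
        have : (toModel d).comp (fromCore d) = SemidirectProduct.inr := by
          apply core_hom_ext
          intro i
          rw [MonoidHom.comp_apply, fromCore_gen, toModel_gen]; rfl
        exact fun g => DFunLike.congr_fun this g
      apply SemidirectProduct.hom_ext
      · apply FreeGroup.ext_hom
        intro y
        obtain ⟨i, h, s, rfl⟩ := exists_leafConj y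
        simp only [MonoidHom.comp_apply, fromModel, SemidirectProduct.lift_inl,
          FreeGroup.lift_apply_of, fromLeafConj_apply, map_mul, map_inv, hcore, toModel_leaf]
        rw [modelLeaf, inr_mul_leaf, mul_one]; rfl
      · ext1 g
        simp only [MonoidHom.comp_apply, fromModel, SemidirectProduct.lift_inr, hcore]; rfl)

theorem raagEquiv_symm_gen (i : Option (Fin k)) :
    (raagEquiv d).symm (modelGen d i) = raagGen d i := by
  rw [MulEquiv.symm_apply_eq]; exact (toModel_gen i).symm

theorem raagEquiv_symm_leaf {i : Fin k} (s : Fin (d i)) :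
    (raagEquiv d).symm (modelLeaf s) = raagLeaf s := by
  rw [MulEquiv.symm_apply_eq]; exact (toModel_leaf s).symm

/-- The retraction of the right-angled Artin group onto the free group on a link, killing all other
generators. -/
noncomputable def raagρ (d : Fin k → ℕ) : ∀ i : Option (Fin k),
    RAAG (t4Graph k d (fun _ => 1) 0) →* FreeGroup (LinkBasis d i)
  | none => treeLift 1 (fun j => FreeGroup.of (linkPivot d j)) (fun _ _ => 1)
      (fun _ => Commute.one_left _) (fun _ _ => Commute.one_right _)
  | some i => treeLift (FreeGroup.of (linkCenter d i)) (fun _ => 1)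
      (fun j s => if h : j = i then FreeGroup.of (linkLeaf (h ▸ s)) else 1)
      (fun _ => Commute.one_right _) (fun _ _ => Commute.one_left _)

/-- The retraction of the model onto the free group on a link. -/
noncomputable def modelρ (d : Fin k → ℕ) (i : Option (Fin k)) :
    TreeModel d →* FreeGroup (LinkBasis d i) :=
  (raagρ d i).comp (raagEquiv d).symm.toMonoidHom

theorem modelρ_gen_self (i : Option (Fin k)) : modelρ d i (modelGen d i) = 1 := by
  change raagρ d i ((raagEquiv d).symm _) = 1
  rw [raagEquiv_symm_gen]
  cases i with
  | none =>
    exact treeLift_center (hcp := fun _ => Commute.one_left _)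
        (hpx := fun _ _ => Commute.one_right _)
  | some i =>
    exact treeLift_pivot (hcp := fun _ => Commute.one_right _)
        (hpx := fun _ _ => Commute.one_left _) i

theorem modelρ_σ (i : Option (Fin k)) (f : FreeGroup (LinkBasis d i)) :
    modelρ d i (modelσ d i f) = f := by
  have : (modelρ d i).comp (modelσ d i) = MonoidHom.id _ := by
    apply FreeGroup.ext_hom
    intro b
    change raagρ d i ((raagEquiv d).symm (modelσ d i (FreeGroup.of b))) = FreeGroup.of b
    cases i with
    | none =>
      rw [modelσ_of (j := some b) rfl, raagEquiv_symm_gen]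
      exact treeLift_pivot (hcp := fun _ => Commute.one_left _)
        (hpx := fun _ _ => Commute.one_right _) _
    | some i =>
      rcases link_cases b with rfl | ⟨s, rfl⟩
      · rw [modelσ_some_none, raagEquiv_symm_gen]
        exact treeLift_center (hcp := fun _ => Commute.one_right _)
          (hpx := fun _ _ => Commute.one_left _)
      · rw [modelσ_some_some, raagEquiv_symm_leaf]
        refine (treeLift_leaf (hcp := fun _ => Commute.one_right _)
        (hpx := fun _ _ => Commute.one_left _) s).trans ?_
        simp
  exact DFunLike.congr_fun this f

/-- The model is generated by elements commuting with the centre or with a pivot. -/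
theorem model_generation (d : Fin k → ℕ) :
    Subgroup.closure {g : TreeModel d | ∃ i, Commute g (modelGen d i)} = ⊤ := by
  have h : Function.Surjective (toModel d) := (raagEquiv d).surjective
  rw [eq_top_iff, ← MonoidHom.range_eq_top.2 h, MonoidHom.range_eq_map,
    ← PresentedGroup.closure_range_of, MonoidHom.map_closure]
  apply Subgroup.closure_mono
  rintro _ ⟨_, ⟨v, rfl⟩, rfl⟩
  cases v with
  | center => exact ⟨none, by erw [toModel_gen none]⟩
  | hair j => exact j.elim0
  | pivot i j =>
    rw [Subsingleton.elim j 0]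
    exact ⟨some i, by erw [toModel_gen (some i)]⟩
  | leaf i j s =>
    rw [Subsingleton.elim j 0]
    exact ⟨some i, by erw [toModel_leaf s]; exact (modelGen_comm_leaf s).symm⟩

end Presentation

/-! ### Elements with non-commutative centralizer -/

section Special
variable {k : ℕ} {d : Fin k → ℕ}

theorem modelExp_conj_zpow (i j : Option (Fin k)) (x : TreeModel d) (a : ℤ) :
    modelExp d i (x * modelGen d j ^ a * x⁻¹) = if j = i then Multiplicative.ofAdd a else 1 := by
  rw [map_mul, map_mul, map_inv, mul_inv_cancel_comm, map_zpow, modelExp_gen]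
  split_ifs
  · exact ofAdd_one_zpow a
  · exact one_zpow a

/-- Conjugates of powers of vertex generators determine the vertex and the exponent. -/
theorem conj_gen_inj {i j : Option (Fin k)} {x y : TreeModel d} {a b : ℤ} (ha : a ≠ 0)
    (h : x * modelGen d i ^ a * x⁻¹ = y * modelGen d j ^ b * y⁻¹) : i = j ∧ a = b := by
  have h1 := congrArg (modelExp d i) h
  rw [modelExp_conj_zpow, modelExp_conj_zpow, if_pos rfl] at h1
  split_ifs at h1 with h2
  · exact ⟨h2.symm, Multiplicative.ofAdd.injective h1⟩
  · exact absurd (Multiplicative.ofAdd.injective (h1.trans ofAdd_zero.symm)) ha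

theorem commute_gen_of_zpow {i : Option (Fin k)} {a : ℤ} (ha : a ≠ 0) {g : TreeModel d}
    (h : Commute g (modelGen d i ^ a)) : Commute g (modelGen d i) := by
  obtain ⟨b, f, rfl⟩ := model_cent ha h
  exact (Commute.zpow_self _ _).mul_left (modelσ_comm i f)

theorem conj_eq_inr_right {x : TreeModel d} {δ γ : CoreGroup k}
    (h : x * SemidirectProduct.inr δ * x⁻¹ = SemidirectProduct.inr γ) :
    γ = x.right * δ * x.right⁻¹ := by
  have h1 := congrArg SemidirectProduct.right h
  simpa using h1.symm

theorem model_cent_none {a : ℤ} (ha : a ≠ 0) {g : TreeModel d}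
    (h : Commute g (modelGen d none ^ a)) : ∃ γ : CoreGroup k, g = SemidirectProduct.inr γ := by
  obtain ⟨b, f, rfl⟩ := model_cent ha h
  rw [modelσ_none, modelGen, ← map_zpow]
  exact ⟨coreGen none ^ b * ((1, f) : CoreGroup k), (map_mul _ _ _).symm⟩

theorem core_none_central (γ : CoreGroup k) (a : ℤ) : Commute γ (coreGen none ^ a) := by
  apply Commute.zpow_right
  refine Prod.ext (mul_comm _ _) ?_
  simp [coreGen]

/-- A conjugate of a power of a vertex generator that commutes with the generator of `i` is either
a power of this generator, or a conjugate, inside the subgroup generated by the link of `i`, of a power of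
the generator of a vertex of this link. -/
theorem commute_special {i j : Option (Fin k)} {x : TreeModel d} {a : ℤ} (ha : a ≠ 0)
    (h : Commute (x * modelGen d j ^ a * x⁻¹) (modelGen d i)) :
    (j = i ∧ x * modelGen d j ^ a * x⁻¹ = modelGen d i ^ a) ∨
    ∃ b f, linkVertex d i b = some j ∧
      x * modelGen d j ^ a * x⁻¹ = modelσ d i f * modelGen d j ^ a * (modelσ d i f)⁻¹ := by
  cases i with
  | none =>
    have h0 : Commute (x * modelGen d j ^ a * x⁻¹) (modelGen d none ^ (1 : ℤ)) := by
      rw [zpow_one]; exact h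
    obtain ⟨γ, hγ⟩ := model_cent_none one_ne_zero h0
    have h1 : x * SemidirectProduct.inr (coreGen j ^ a) * x⁻¹ = SemidirectProduct.inr γ := by
      rw [← hγ, map_zpow]; rfl
    have h2 := conj_eq_inr_right h1
    cases j with
    | none =>
      left
      refine ⟨rfl, ?_⟩
      rw [hγ, h2, (core_none_central _ _).eq, mul_inv_cancel_right, map_zpow]; rfl
    | some j =>
      right
      obtain ⟨f, hf⟩ := exists_modelσ_none (d := d) x.right.2
      refine ⟨linkPivot d j, f, rfl, ?_⟩
      rw [hγ, hf, modelGen, ← map_zpow, ← map_inv, ← map_mul, ← map_mul, h2]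
      congr 1
      exact Prod.ext (by simp) (by simp)
  | some i =>
    have hy : Commute (x⁻¹ * modelGen d (some i) * x) (modelGen d j ^ a) := by
      rw [commute_iff_eq] at h ⊢
      calc _ = x⁻¹ * (modelGen d (some i) * (x * modelGen d j ^ a * x⁻¹)) * x := by group
        _ = x⁻¹ * ((x * modelGen d j ^ a * x⁻¹) * modelGen d (some i)) * x := by rw [h]
        _ = _ := by group
    cases j with
    -- the free part `u` of `x` commutes with the pivot `i`, and the core part does not matter as the
    -- centre is central in the core
    | none =>
      right
      obtain ⟨γ, hγ⟩ := model_cent_none ha hy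
      have hx := SemidirectProduct.inl_left_mul_inr_right x
      set u : TreeModel d := SemidirectProduct.inl x.left with hu
      have h1 : x⁻¹ * SemidirectProduct.inr (pivotElt i) * x⁻¹⁻¹ = SemidirectProduct.inr γ := by
        rw [inv_inv, ← hγ]; rfl
      have h2 := conj_eq_inr_right h1
      have h3 : Commute u (modelGen d (some i) ^ (1 : ℤ)) := by
        rw [zpow_one, commute_iff_eq]
        have h4 : modelGen d (some i) * x = x * SemidirectProduct.inr γ := by
          rw [← hγ]; group
        have h5 : SemidirectProduct.inr x.right * SemidirectProduct.inr γ
            = modelGen d (some i) * SemidirectProduct.inr x.right := by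
          rw [← map_mul, h2]
          change _ = SemidirectProduct.inr (pivotElt i) * SemidirectProduct.inr x.right
          rw [← map_mul, SemidirectProduct.inv_right]
          congr 1
          group
        rw [← hx, mul_assoc u, h5, ← mul_assoc, ← mul_assoc] at h4
        exact (mul_right_cancel h4).symm
      obtain ⟨b, f, hf⟩ := model_cent one_ne_zero h3
      refine ⟨linkCenter d i, f, rfl, ?_⟩
      have h6 : Commute (SemidirectProduct.inr x.right : TreeModel d) (modelGen d none ^ a) := by
        have := (core_none_central x.right a).map
          (SemidirectProduct.inr : CoreGroup k →* TreeModel d)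
        rwa [map_zpow] at this
      have h7 : Commute (modelGen d (some i) ^ b)
          (modelσ d (some i) f * modelGen d none ^ a * (modelσ d (some i) f)⁻¹) := by
        have := (modelσ_comm (some i) (f * FreeGroup.of (linkCenter d i) ^ a * f⁻¹)).zpow_right b
        rw [map_mul, map_mul, map_inv, map_zpow, modelσ_some_none] at this
        exact this.symm
      calc x * modelGen d none ^ a * x⁻¹
          = u * (SemidirectProduct.inr x.right * modelGen d none ^ a) *
              (SemidirectProduct.inr x.right)⁻¹ * u⁻¹ := by
            conv_lhs => rw [← hx]
            group
        _ = u * modelGen d none ^ a * u⁻¹ := by rw [h6.eq]; group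
        _ = (modelGen d (some i) ^ b *
              (modelσ d (some i) f * modelGen d none ^ a * (modelσ d (some i) f)⁻¹)) *
              (modelGen d (some i) ^ b)⁻¹ := by rw [hf]; group
        _ = _ := by rw [h7.eq]; group
    -- `x⁻¹ * t * x`, for `t` the generator of the pivot `i`, lies in the star of `j`; exponent sums
    -- give `i = j`, and the retraction onto the link shows that it is equal to `t`
    | some j =>
      left
      obtain ⟨b, f, hf⟩ := model_cent ha hy
      have h1 := congrArg (modelExp d (some i)) hf
      have h0 : modelExp d (some i) (x⁻¹ * modelGen d (some i) * x)
          = modelExp d (some i) (modelGen d (some i)) := by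
        rw [map_mul, map_mul, map_inv, mul_comm, mul_inv_cancel_left]
      rw [h0, map_mul, modelExp_σ_self, mul_one, modelExp_gen, if_pos rfl, map_zpow,
        modelExp_gen] at h1
      split_ifs at h1 with h2
      · obtain rfl := Option.some_inj.1 h2
        rw [ofAdd_one_zpow] at h1
        obtain rfl := Multiplicative.ofAdd.injective h1
        have h3 := congrArg (modelρ d (some j)) hf
        rw [map_mul, map_mul, map_mul, map_zpow, modelρ_gen_self, modelρ_σ, map_inv, one_zpow,
          mul_one, inv_mul_cancel, one_mul] at h3
        rw [← h3, map_one, mul_one, zpow_one] at hf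
        refine ⟨rfl, ?_⟩
        have h4 : Commute x (modelGen d (some j)) := by
          rw [commute_iff_eq]
          calc _ = x * (x⁻¹ * modelGen d (some j) * x) := by rw [hf]
            _ = _ := by group
        rw [(h4.zpow_right a).eq, mul_inv_cancel_right]
      · rw [one_zpow] at h1
        exact absurd (Multiplicative.ofAdd.injective (h1.trans ofAdd_zero.symm)) one_ne_zero

theorem card_link_none (d : Fin k → ℕ) : Fintype.card (LinkBasis d none) = k :=
  Fintype.card_fin k

theorem card_link_some (d : Fin k → ℕ) (i : Fin k) :
    Fintype.card (LinkBasis d (some i)) = d i + 1 := by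
  change Fintype.card (Option (Fin (d i))) = _
  simp

end Special

/-! ### Averages and proportionality -/

/-- `y` is the average, over a finite nonempty family hitting exactly the indices satisfying `P`,
of the values of `b`. -/
def IsAverage {β : Type*} (y : ℚ) (P : β → Prop) (b : β → ℚ) : Prop :=
  ∃ (Q : Type) (_ : Fintype Q) (_ : Nonempty Q) (f : Q → β),
    (∀ q, P (f q)) ∧ (∀ j, P j → ∃ q, f q = j) ∧ Fintype.card Q * y = ∑ q, b (f q)

namespace IsAverage
variable {β : Type*} {y : ℚ} {P : β → Prop} {b : β → ℚ}

theorem exists_le (h : IsAverage y P b) : ∃ j, P j ∧ b j ≤ y := by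
  obtain ⟨Q, _, _, f, h1, -, h3⟩ := h
  by_contra! hc
  have := Finset.sum_lt_sum_of_nonempty (s := (Finset.univ : Finset Q)) Finset.univ_nonempty
    (fun q _ => hc (f q) (h1 q))
  simp [← h3] at this

theorem exists_ge (h : IsAverage y P b) : ∃ j, P j ∧ y ≤ b j := by
  obtain ⟨Q, _, _, f, h1, -, h3⟩ := h
  by_contra! hc
  have := Finset.sum_lt_sum_of_nonempty (s := (Finset.univ : Finset Q)) Finset.univ_nonempty
    (fun q _ => hc (f q) (h1 q))
  simp [← h3] at this

theorem exists_gt (h : IsAverage y P b) {j : β} (hj : P j) (hlt : b j < y) :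
    ∃ j', P j' ∧ y < b j' := by
  obtain ⟨Q, _, _, f, h1, h2, h3⟩ := h
  by_contra! hc
  obtain ⟨q, rfl⟩ := h2 j hj
  have := Finset.sum_lt_sum (s := (Finset.univ : Finset Q))
    (fun q _ => hc (f q) (h1 q)) ⟨q, Finset.mem_univ _, hlt⟩
  simp [← h3] at this

end IsAverage

/-- If a relation between two finite families of numbers is such that every number with a smaller
partner also has a larger one, then related numbers are equal: look at an unequal pair with the
largest possible maximum. -/
theorem eq_of_balanced {α β : Type*} [Finite α] [Finite β] (A : α → ℚ) (b : β → ℚ)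
    (R : α → β → Prop)
    (hA : ∀ i j, R i j → b j < A i → ∃ j', R i j' ∧ A i < b j')
    (hB : ∀ i j, R i j → A i < b j → ∃ i', R i' j ∧ b j < A i') {i j} (hij : R i j) :
    A i = b j := by
  by_contra hne
  let s : Set (α × β) := {p | R p.1 p.2 ∧ A p.1 ≠ b p.2}
  obtain ⟨p, hp, hmax⟩ := Set.exists_max_image s (fun p => max (A p.1) (b p.2)) s.toFinite
    ⟨(i, j), hij, hne⟩
  rcases lt_or_gt_of_ne hp.2 with hlt | hlt
  · obtain ⟨i', h1, h2⟩ := hB _ _ hp.1 hlt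
    have := hmax (i', p.2) ⟨h1, h2.ne'⟩
    rw [max_eq_left h2.le, max_eq_right hlt.le] at this
    exact absurd h2 this.not_gt
  · obtain ⟨j', h1, h2⟩ := hA _ _ hp.1 hlt
    have := hmax (p.1, j') ⟨h1, h2.ne⟩
    simp only at this
    rw [max_eq_right h2.le, max_eq_left hlt.le] at this
    exact absurd h2 this.not_gt

/-- The two families of averaging identities force the two tuples to be proportional: comparing
extreme values gives `r * r' = 1`, then `eq_of_balanced` gives `m i = r * n j` for related `i` and
`j`, and strictly increasing maps between `Fin k` and `Fin l` in both directions exist only if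
`k = l`, when they are the identity. -/
theorem proportional_of_averages {k l : ℕ} (m : Fin k → ℕ) (n : Fin l → ℕ)
    (hk : 0 < k) (hl : 0 < l) (hm : StrictMono m) (hn : StrictMono n)
    (hmpos : ∀ i, 0 < m i) (hnpos : ∀ i, 0 < n i) (R : Fin k → Fin l → Prop) (r r' : ℚ)
    (h1 : ∀ i, IsAverage (r / m i) (fun j => R i j) (fun j => 1 / (n j : ℚ)))
    (h2 : ∀ j, IsAverage (r' / n j) (fun i => R i j) (fun i => 1 / (m i : ℚ))) :
    ∃ h : k = l, ∀ i j : Fin k, n (Fin.cast h i) * m j = n (Fin.cast h j) * m i := by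
  have : Nonempty (Fin k) := ⟨⟨0, hk⟩⟩
  have : Nonempty (Fin l) := ⟨⟨0, hl⟩⟩
  have hm' : ∀ i, (0 : ℚ) < m i := fun i => by exact_mod_cast hmpos i
  have hn' : ∀ i, (0 : ℚ) < n i := fun i => by exact_mod_cast hnpos i
  have hr : 0 < r := by
    obtain ⟨j, -, hj⟩ := (h1 ⟨0, hk⟩).exists_le
    have : 0 < r / m ⟨0, hk⟩ := lt_of_lt_of_le (by have := hn' j; positivity) hj
    exact (div_pos_iff_of_pos_right (hm' _)).1 this
  have hr' : 0 < r' := by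
    obtain ⟨j, -, hj⟩ := (h2 ⟨0, hl⟩).exists_le
    have : 0 < r' / n ⟨0, hl⟩ := lt_of_lt_of_le (by have := hm' j; positivity) hj
    exact (div_pos_iff_of_pos_right (hn' _)).1 this
  -- an average is at most the largest value
  have hle : r * r' ≤ 1 := by
    obtain ⟨i, hi⟩ := Finite.exists_max (fun i => 1 / (m i : ℚ))
    obtain ⟨j, hj⟩ := Finite.exists_max (fun j => 1 / (n j : ℚ))
    obtain ⟨j', -, e1⟩ := (h1 i).exists_ge
    obtain ⟨i', -, e2⟩ := (h2 j).exists_ge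
    have e3 := (e1.trans (hj j'))
    have e4 := (e2.trans (hi i'))
    rw [div_le_div_iff₀ (hm' _) (hn' _)] at e3
    rw [div_le_div_iff₀ (hn' _) (hm' _)] at e4
    have := hm' i
    have := hn' j
    by_contra! hc
    nlinarith
  -- an average is at least the smallest value
  have hge : 1 ≤ r * r' := by
    obtain ⟨i, hi⟩ := Finite.exists_min (fun i => 1 / (m i : ℚ))
    obtain ⟨j, hj⟩ := Finite.exists_min (fun j => 1 / (n j : ℚ))
    obtain ⟨j', -, e1⟩ := (h1 i).exists_le
    obtain ⟨i', -, e2⟩ := (h2 j).exists_le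
    have e3 := ((hj j').trans e1)
    have e4 := ((hi i').trans e2)
    rw [div_le_div_iff₀ (hn' _) (hm' _)] at e3
    rw [div_le_div_iff₀ (hm' _) (hn' _)] at e4
    have := hm' i
    have := hn' j
    by_contra! hc
    nlinarith
  have hrr : r * r' = 1 := le_antisymm hle hge
  have key : ∀ i j, R i j → r / m i = 1 / (n j : ℚ) := by
    intro i j hij
    refine eq_of_balanced (fun i => r / (m i : ℚ)) (fun j => 1 / (n j : ℚ)) R ?_ ?_ hij
    · intro i j hij hlt
      exact (h1 i).exists_gt hij hlt
    · intro i j hij hlt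
      have e : r' / n j = r' * (1 / n j) := by ring
      obtain ⟨i', a1, a2⟩ := (h2 j).exists_gt hij (by
        have := mul_lt_mul_of_pos_left hlt hr'
        rw [e]
        refine lt_of_eq_of_lt ?_ this
        rw [mul_div_assoc', mul_comm r' r, hrr])
      refine ⟨i', a1, ?_⟩
      have := mul_lt_mul_of_pos_left a2 hr
      rw [mul_div_assoc', hrr, mul_one_div] at this
      exact this
  have key' : ∀ i j, R i j → (m i : ℚ) = r * n j := by
    intro i j hij
    have := key i j hij
    rw [div_eq_div_iff (hm' i).ne' (hn' j).ne'] at this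
    linarith
  -- related numbers are proportional, so any choice of related indices is increasing
  choose f hf using fun i => (h1 i).exists_le
  choose g hg using fun j => (h2 j).exists_le
  have fmono : StrictMono f := by
    intro i i' hii
    by_contra! hc
    have a1 : (n (f i') : ℚ) ≤ n (f i) := by exact_mod_cast hn.monotone hc
    have a2 : (m i : ℚ) < m i' := by exact_mod_cast hm hii
    rw [key' _ _ (hf i).1, key' _ _ (hf i').1] at a2
    nlinarith
  have gmono : StrictMono g := by
    intro i i' hii
    by_contra! hc
    have a1 : (m (g i') : ℚ) ≤ m (g i) := by exact_mod_cast hm.monotone hc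
    have a2 : (n i : ℚ) < n i' := by exact_mod_cast hn hii
    rw [key' _ _ (hg i).1, key' _ _ (hg i').1] at a1
    nlinarith
  have hkl : k = l := by
    apply le_antisymm
    · simpa using Fintype.card_le_of_injective f fmono.injective
    · simpa using Fintype.card_le_of_injective g gmono.injective
  subst hkl
  have hid : ∀ i, f i = i := by
    have : f = id := by
      have h := Subsingleton.elim (α := Fin k ≃o Fin k)
        (fmono.orderIsoOfSurjective f (Finite.surjective_of_injective fmono.injective))
        (OrderIso.refl _)
      ext1 i
      exact congrArg (fun e : Fin k ≃o Fin k => e i) h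
    intro i; rw [this]; rfl
  refine ⟨rfl, fun i j => ?_⟩
  have e1 := key' _ _ (hf i).1
  have e2 := key' _ _ (hf j).1
  rw [hid] at e1 e2
  have : (n i : ℚ) * m j = n j * m i := by rw [e1, e2]; ring
  simpa using (by exact_mod_cast this : n i * m j = n j * m i)

/-! ### Vertex generators of commensurable groups -/

section VertexConj
variable {k : ℕ} {d : Fin k → ℕ}

/-- The conjugate by `x` of the generator of the centre (`none`) or of a pivot (`some i`). -/
def vgen (x : TreeModel d) (i : Option (Fin k)) : TreeModel d := x * modelGen d i * x⁻¹

theorem vgen_zpow (x : TreeModel d) (i : Option (Fin k)) (a : ℤ) :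
    vgen x i ^ a = x * modelGen d i ^ a * x⁻¹ := conj_zpow

theorem mul_vgen (y x : TreeModel d) (i : Option (Fin k)) :
    y * vgen x i * y⁻¹ = vgen (y * x) i := by
  unfold vgen; group

theorem mul_vgen_zpow (y x : TreeModel d) (i : Option (Fin k)) (a : ℤ) :
    y * vgen x i ^ a * y⁻¹ = vgen (y * x) i ^ a := by
  rw [← mul_vgen, conj_zpow]

theorem vgen_mul_of_commute {y x : TreeModel d} {i : Option (Fin k)}
    (h : Commute y (modelGen d i)) : vgen (x * y) i = vgen x i := by
  unfold vgen
  rw [mul_assoc x, h.eq]; group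

theorem commute_conj_iff {x g h : TreeModel d} :
    Commute g (x * h * x⁻¹) ↔ Commute (x⁻¹ * g * x) h := by
  have := Commute.conj_iff (a := x⁻¹ * g * x) (b := h) x
  rw [← this]
  have e : x * (x⁻¹ * g * x) * x⁻¹ = g := by group
  rw [e]

theorem commute_vgen_of_zpow {x g : TreeModel d} {i : Option (Fin k)} {a : ℤ} (ha : a ≠ 0)
    (h : Commute g (vgen x i ^ a)) : Commute g (vgen x i) := by
  rw [vgen_zpow, commute_conj_iff] at h
  exact commute_conj_iff.2 (commute_gen_of_zpow ha h)

theorem vgen_zpow_inj {x y : TreeModel d} {i j : Option (Fin k)} {a b : ℤ} (ha : a ≠ 0)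
    (h : vgen x i ^ a = vgen y j ^ b) : a = b ∧ i = j ∧ vgen x i = vgen y j := by
  have h' := h
  rw [vgen_zpow, vgen_zpow] at h'
  obtain ⟨rfl, rfl⟩ := conj_gen_inj ha h'
  refine ⟨rfl, rfl, ?_⟩
  have h1 : Commute (y⁻¹ * x) (modelGen d i) := by
    apply commute_gen_of_zpow ha
    rw [commute_iff_eq]
    calc _ = y⁻¹ * (x * modelGen d i ^ a * x⁻¹) * x := by group
      _ = _ := by rw [h']; group
  calc vgen x i = vgen (y * (y⁻¹ * x)) i := by rw [mul_inv_cancel_left]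
    _ = _ := vgen_mul_of_commute h1

theorem vgen_zpow_ne_one (x : TreeModel d) (i : Option (Fin k)) {a : ℤ} (ha : a ≠ 0) :
    vgen x i ^ a ≠ 1 := by
  intro h
  have := vgen_zpow_inj (x := x) (y := x) (i := i) (j := i) (b := 0) ha (by rw [h, zpow_zero])
  exact ha this.1

/-- Commuting conjugates of vertex generators: they are equal, or one of them is carried by the
link of the other. -/
theorem commute_vgen {x y : TreeModel d} {i j : Option (Fin k)}
    (h : Commute (vgen y j) (vgen x i)) : vgen y j = vgen x i ∨
      ∃ b f, linkVertex d i b = some j ∧ vgen y j = vgen (x * modelσ d i f) j := by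
  have h1 : Commute (x⁻¹ * y * modelGen d j ^ (1 : ℤ) * (x⁻¹ * y)⁻¹) (modelGen d i) := by
    have := commute_conj_iff.1 h
    have e : x⁻¹ * vgen y j * x = x⁻¹ * y * modelGen d j ^ (1 : ℤ) * (x⁻¹ * y)⁻¹ := by
      unfold vgen; group
    rwa [e] at this
  have e2 : ∀ z, x⁻¹ * y * modelGen d j ^ (1 : ℤ) * (x⁻¹ * y)⁻¹ = z → vgen y j = x * z * x⁻¹ := by
    rintro _ rfl
    unfold vgen; group
  rcases commute_special one_ne_zero h1 with ⟨rfl, h2⟩ | ⟨b, f, hb, h2⟩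
  · left
    rw [e2 _ h2, zpow_one]; rfl
  · right
    refine ⟨b, f, hb, ?_⟩
    rw [e2 _ h2, zpow_one]
    unfold vgen; group

/-- Of two distinct commuting conjugates of vertex generators, exactly one is a conjugate of the
centre. -/
theorem isSome_ne_of_commute {x y : TreeModel d} {i j : Option (Fin k)}
    (h : Commute (vgen y j) (vgen x i)) (hne : vgen y j ≠ vgen x i) : j.isSome ≠ i.isSome := by
  rcases commute_vgen h with h | ⟨b, f, hb, -⟩
  · exact absurd h hne
  · cases i with
    | none => obtain rfl := Option.some_inj.1 hb; simp
    | some i =>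
      rcases link_cases b with rfl | ⟨s, rfl⟩
      · obtain rfl := Option.some_inj.1 hb; simp
      · cases hb

theorem modelρ_vertex {i j : Option (Fin k)} {b : LinkBasis d i} (h : linkVertex d i b = some j) :
    modelρ d i (modelGen d j) = FreeGroup.of b := by
  rw [← modelσ_of h, modelρ_σ]

end VertexConj

section Pair
variable {k l : ℕ} {d : Fin k → ℕ} {e : Fin l → ℕ} {Γ : Type} [Group Γ]

/-- A group with finite index embeddings into two models, whose trees have at least two pivots,
each with at least one leaf. -/
structure CommPair (u : Γ →* TreeModel d) (v : Γ →* TreeModel e) : Prop where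
  inj_u : Function.Injective u
  inj_v : Function.Injective v
  fin_u : u.range.FiniteIndex
  fin_v : v.range.FiniteIndex
  hk : 2 ≤ k
  hl : 2 ≤ l
  hd : ∀ i, 0 < d i
  he : ∀ i, 0 < e i

/-- Two elements are linked if nontrivial powers of them correspond to each other under the
embeddings of the common finite index subgroup. -/
def Linked (u : Γ →* TreeModel d) (v : Γ →* TreeModel e) (p : TreeModel d) (p' : TreeModel e) :
    Prop :=
  ∃ (γ : Γ) (a b : ℤ), a ≠ 0 ∧ b ≠ 0 ∧ u γ = p ^ a ∧ v γ = p' ^ b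

variable {u : Γ →* TreeModel d} {v : Γ →* TreeModel e}

theorem CommPair.symm (h : CommPair u v) : CommPair v u :=
  ⟨h.inj_v, h.inj_u, h.fin_v, h.fin_u, h.hl, h.hk, h.he, h.hd⟩

theorem Linked.symm {p : TreeModel d} {p' : TreeModel e} (h : Linked u v p p') :
    Linked v u p' p := by
  obtain ⟨γ, a, b, ha, hb, h1, h2⟩ := h
  exact ⟨γ, b, a, hb, ha, h2, h1⟩

theorem Linked.conj {x : TreeModel d} {x' : TreeModel e} {i : Option (Fin k)} {i' : Option (Fin l)}
    (h : Linked u v (vgen x i) (vgen x' i')) (δ : Γ) :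
    Linked u v (vgen (u δ * x) i) (vgen (v δ * x') i') := by
  obtain ⟨γ, a, b, ha, hb, h1, h2⟩ := h
  refine ⟨δ * γ * δ⁻¹, a, b, ha, hb, ?_, ?_⟩
  · rw [map_mul, map_mul, map_inv, h1, mul_vgen_zpow]
  · rw [map_mul, map_mul, map_inv, h2, mul_vgen_zpow]

theorem CommPair.commute_iff (h : CommPair u v) {γ δ : Γ} :
    Commute (u γ) (u δ) ↔ Commute (v γ) (v δ) := by
  simp only [commute_iff_eq, ← map_mul, h.inj_u.eq_iff, h.inj_v.eq_iff]

theorem CommPair.exists_pow (h : CommPair u v) :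
    ∃ N : ℕ, 0 < N ∧ ∀ g, ∃ γ, u γ = g ^ N :=
  ⟨u.range.index.factorial, Nat.factorial_pos _, fun g =>
    Subgroup.pow_mem_of_index_ne_zero_of_dvd h.fin_u.index_ne_zero g
      fun _ h1 h2 => Nat.dvd_factorial h1 h2⟩

theorem CommPair.two_le_card_link (h : CommPair u v) (i : Option (Fin k)) :
    2 ≤ Fintype.card (LinkBasis d i) := by
  cases i with
  | none => rw [card_link_none]; exact h.hk
  | some i => rw [card_link_some]; have := h.hd i; omega

theorem freeGroup_zpow_commute_ne {X : Type*} {x y : X} {a b : ℤ} (ha : a ≠ 0) (hb : b ≠ 0)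
    (h : Commute (FreeGroup.of x ^ a) (FreeGroup.of y ^ b)) : x = y := by
  obtain ⟨e, he⟩ := freeGroup_eq_zpow_of_commute hb h
  exact (freeGroup_conj_zpow_eq (u := 1) ha (by simpa using he)).1

/-- Every conjugate of a vertex generator is linked to some conjugate of a vertex generator on the
other side: a power of it lies in the common subgroup and has a centralizer there that is not
abelian, and `model_special` applies to its image. -/
theorem CommPair.exists_linked (h : CommPair u v) (x : TreeModel d) (i : Option (Fin k)) :
    ∃ x' i', Linked u v (vgen x i) (vgen x' i') := by
  obtain ⟨N, hN, hpow⟩ := h.exists_pow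
  have hN' : (N : ℤ) ≠ 0 := by exact_mod_cast hN.ne'
  obtain ⟨γ, hγ⟩ := hpow (vgen x i)
  obtain ⟨b₁, b₂, hb⟩ := Fintype.exists_pair_of_one_lt_card (h.two_le_card_link i)
  obtain ⟨γ₁, h₁⟩ := hpow (x * modelσ d i (FreeGroup.of b₁) * x⁻¹)
  obtain ⟨γ₂, h₂⟩ := hpow (x * modelσ d i (FreeGroup.of b₂) * x⁻¹)
  have hc : ∀ b, Commute ((x * modelσ d i (FreeGroup.of b) * x⁻¹) ^ N) (vgen x i ^ N) := by
    intro b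
    apply Commute.pow_pow
    exact (Commute.conj_iff x).2 (modelσ_comm i _)
  have hnc : ¬ Commute (v γ₁) (v γ₂) := by
    rw [← h.commute_iff, h₁, h₂, conj_pow, conj_pow, Commute.conj_iff]
    intro hcc
    have := hcc.map (modelρ d i)
    rw [map_pow, map_pow, modelρ_σ, modelρ_σ, ← zpow_natCast, ← zpow_natCast] at this
    exact hb (freeGroup_zpow_commute_ne hN' hN' this)
  have hne : v γ ≠ 1 := by
    rw [Ne, map_eq_one_iff v h.inj_v, ← map_eq_one_iff u h.inj_u, hγ, ← zpow_natCast]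
    exact vgen_zpow_ne_one _ _ hN'
  obtain ⟨x', i', a, ha, hx⟩ := model_special hne
    (h.commute_iff.1 (by rw [h₁, hγ]; exact hc b₁)) (h.commute_iff.1 (by rw [h₂, hγ]; exact hc b₂))
    hnc
  exact ⟨x', i', γ, N, a, hN', ha, by rw [hγ, zpow_natCast], by rw [hx, vgen_zpow]⟩

/-- Links are unique. -/
theorem Linked.unique (h : CommPair u v) {p : TreeModel d} {x' y' : TreeModel e}
    {i' j' : Option (Fin l)} (h1 : Linked u v p (vgen x' i')) (h2 : Linked u v p (vgen y' j')) :
    vgen x' i' = vgen y' j' ∧ i' = j' := by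
  obtain ⟨γ, a, b, ha, hb, e1, e2⟩ := h1
  obtain ⟨δ, a', b', ha', hb', e1', e2'⟩ := h2
  have h3 : γ ^ a' = δ ^ a := by
    apply h.inj_u
    rw [map_zpow, map_zpow, e1, e1', ← zpow_mul, ← zpow_mul, mul_comm]
  have h4 := congrArg v h3
  rw [map_zpow, map_zpow, e2, e2', ← zpow_mul, ← zpow_mul] at h4
  obtain ⟨-, h5, h6⟩ := vgen_zpow_inj (mul_ne_zero hb ha') h4
  exact ⟨h6, h5⟩

theorem Linked.commute (h : CommPair u v) {x : TreeModel d} {i : Option (Fin k)}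
    {x' : TreeModel e} {i' : Option (Fin l)} (h1 : Linked u v (vgen x i) (vgen x' i')) {γ : Γ}
    (hγ : Commute (u γ) (vgen x i)) : Commute (v γ) (vgen x' i') := by
  obtain ⟨δ, a, b, ha, hb, e1, e2⟩ := h1
  apply commute_vgen_of_zpow hb
  rw [← e2, ← h.commute_iff, e1]
  exact hγ.zpow_right a

theorem Linked.commute_vgen (h : CommPair u v) {x y : TreeModel d} {i j : Option (Fin k)}
    {x' y' : TreeModel e} {i' j' : Option (Fin l)} (h1 : Linked u v (vgen x i) (vgen x' i'))
    (h2 : Linked u v (vgen y j) (vgen y' j')) (hc : Commute (vgen y j) (vgen x i)) :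
    Commute (vgen y' j') (vgen x' i') := by
  obtain ⟨δ, a, b, ha, hb, e1, e2⟩ := h2
  have := h1.commute h (γ := δ) (by rw [e1]; exact hc.zpow_left a)
  rw [e2] at this
  exact (commute_vgen_of_zpow hb this.symm).symm

open Classical in
/-- The stretch factor of a conjugate `p` of a vertex generator: the ratio `|b| / |a|` of the
exponents of corresponding powers of `p` and of the element it is linked to. It does not depend on
the choices by `stretch_eq`; the value is `0` if there are no corresponding powers. -/
noncomputable def stretch (u : Γ →* TreeModel d) (v : Γ →* TreeModel e) (p : TreeModel d) : ℚ :=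
  if h : ∃ r : ℚ, ∃ (γ : Γ) (a b : ℤ) (x' : TreeModel e) (i' : Option (Fin l)), a ≠ 0 ∧
    u γ = p ^ a ∧ v γ = vgen x' i' ^ b ∧ r = |b| / |a| then h.choose else 0

theorem stretch_eq (h : CommPair u v) {p : TreeModel d} {γ : Γ} {a b : ℤ} {x' : TreeModel e}
    {i' : Option (Fin l)} (ha : a ≠ 0) (hb : b ≠ 0) (h1 : u γ = p ^ a) (h2 : v γ = vgen x' i' ^ b) :
    stretch u v p = |b| / |a| := by
  have hex : ∃ r : ℚ, ∃ (γ : Γ) (a b : ℤ) (x' : TreeModel e) (i' : Option (Fin l)), a ≠ 0 ∧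
    u γ = p ^ a ∧ v γ = vgen x' i' ^ b ∧ r = |b| / |a| := ⟨_, γ, a, b, x', i', ha, h1, h2, rfl⟩
  rw [stretch, dif_pos hex]
  obtain ⟨δ, a', b', y', j', ha', e1, e2, e3⟩ := hex.choose_spec
  rw [e3]
  have h3 : γ ^ a' = δ ^ a := by
    apply h.inj_u
    rw [map_zpow, map_zpow, e1, h1, ← zpow_mul, ← zpow_mul, mul_comm]
  have h4 := congrArg v h3
  rw [map_zpow, map_zpow, h2, e2, ← zpow_mul, ← zpow_mul] at h4
  obtain ⟨h5, -⟩ := vgen_zpow_inj (mul_ne_zero hb ha') h4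
  rw [div_eq_div_iff (by exact_mod_cast abs_ne_zero.2 ha') (by exact_mod_cast abs_ne_zero.2 ha)]
  have h6 := congrArg (fun z : ℤ => ((|z| : ℤ) : ℚ)) h5
  simp only [abs_mul, Int.cast_mul] at h6
  rw [h6]

theorem stretch_conj (h : CommPair u v) (x : TreeModel d) (i : Option (Fin k)) (δ : Γ) :
    stretch u v (vgen (u δ * x) i) = stretch u v (vgen x i) := by
  obtain ⟨x', i', γ, a, b, ha, hb, h1, h2⟩ := h.exists_linked x i
  rw [stretch_eq h ha hb h1 h2]
  refine stretch_eq h (γ := δ * γ * δ⁻¹) (x' := v δ * x') (i' := i') ha hb ?_ ?_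
  · rw [map_mul, map_mul, map_inv, h1, mul_vgen_zpow]
  · rw [map_mul, map_mul, map_inv, h2, mul_vgen_zpow]

end Pair

/-! ### Link maps -/

section LinkMap
variable {k l : ℕ} {d : Fin k → ℕ} {e : Fin l → ℕ} {Γ : Type} [Group Γ]

/-- The map to the free group on the link of `i` which, on the elements carried into the
centralizer of `vgen x i`, is the quotient by the powers of `vgen x i`. -/
noncomputable def linkMap (u : Γ →* TreeModel d) (x : TreeModel d) (i : Option (Fin k)) :
    Γ →* FreeGroup (LinkBasis d i) :=
  (modelρ d i).comp ((MulAut.conj x⁻¹).toMonoidHom.comp u)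

variable {u : Γ →* TreeModel d} {v : Γ →* TreeModel e}

theorem linkMap_apply (x : TreeModel d) (i : Option (Fin k)) (γ : Γ) :
    linkMap u x i γ = modelρ d i (x⁻¹ * u γ * x) := by
  rw [← inv_inv x]
  simp [linkMap]

theorem linkMap_of_eq {x : TreeModel d} {i : Option (Fin k)} {γ : Γ} {b : ℤ}
    {f : FreeGroup (LinkBasis d i)} (h : u γ = vgen x i ^ b * (x * modelσ d i f * x⁻¹)) :
    linkMap u x i γ = f := by
  have h1 : x⁻¹ * u γ * x = modelGen d i ^ b * modelσ d i f := by
    rw [h, vgen_zpow]; group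
  rw [linkMap_apply, h1, map_mul, map_zpow, modelρ_gen_self, modelρ_σ, one_zpow, one_mul]

/-- The centralizer of a conjugate of a vertex generator is the product of its powers and of the
conjugate of the free group on the link. -/
theorem eq_of_commute {x : TreeModel d} {i : Option (Fin k)} {γ : Γ}
    (h : Commute (u γ) (vgen x i)) :
    ∃ b : ℤ, u γ = vgen x i ^ b * (x * modelσ d i (linkMap u x i γ) * x⁻¹) := by
  have h0 : Commute (x⁻¹ * u γ * x) (modelGen d i ^ (1 : ℤ)) := by
    rw [zpow_one]; exact commute_conj_iff.1 h
  obtain ⟨b, f, hf⟩ := model_cent one_ne_zero h0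
  have h1 : u γ = vgen x i ^ b * (x * modelσ d i f * x⁻¹) := by
    calc u γ = x * (x⁻¹ * u γ * x) * x⁻¹ := by group
      _ = _ := by rw [hf, vgen_zpow]; group
  refine ⟨b, ?_⟩
  rw [linkMap_of_eq h1]
  exact h1

theorem linkMap_vgen {x : TreeModel d} {i : Option (Fin k)} {γ : Γ} {b : ℤ}
    (h : u γ = vgen x i ^ b) : linkMap u x i γ = 1 :=
  linkMap_of_eq (b := b) (by rw [h]; simp)

/-- The kernels of the two link maps agree on the common centralizer. -/
theorem Linked.linkMap_eq_one (h : CommPair u v) {x : TreeModel d} {i : Option (Fin k)}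
    {x' : TreeModel e} {i' : Option (Fin l)} (h1 : Linked u v (vgen x i) (vgen x' i')) {γ : Γ}
    (hγ : Commute (u γ) (vgen x i)) (h2 : linkMap u x i γ = 1) : linkMap v x' i' γ = 1 := by
  obtain ⟨b, hb⟩ := eq_of_commute hγ
  rw [h2, map_one, mul_one, mul_inv_cancel, mul_one] at hb
  obtain ⟨δ, a, a', ha, ha', e1, e2⟩ := h1
  have h3 : γ ^ a = δ ^ b := by
    apply h.inj_u
    rw [map_zpow, map_zpow, e1, hb, ← zpow_mul, ← zpow_mul, mul_comm]
  have h4 := congrArg (linkMap v x' i') h3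
  rw [map_zpow, map_zpow, linkMap_vgen e2, one_zpow] at h4
  exact (IsMulTorsionFree.zpow_eq_one_iff_left ha).1 h4

theorem abs_cast_mul_eq {a b c f : ℤ} (h : a * b = c * f) :
    |(a : ℚ)| * |(b : ℚ)| = |(c : ℚ)| * |(f : ℚ)| := by
  rw [← abs_mul, ← abs_mul]
  exact_mod_cast congrArg (fun z : ℤ => |z|) h

/-- The link maps carry conjugates of powers of link vertices that are not leaves to each other,
and the exponents are stretched by the factors `stretch`. -/
theorem Linked.linkMap_conj (h : CommPair u v) {x : TreeModel d} {i : Option (Fin k)}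
    {x' : TreeModel e} {i' : Option (Fin l)} (h1 : Linked u v (vgen x i) (vgen x' i')) {γ : Γ}
    (hγ : Commute (u γ) (vgen x i)) {s : LinkBasis d i} {j : Option (Fin k)}
    (hs : linkVertex d i s = some j) {m : ℤ} {y : FreeGroup (LinkBasis d i)}
    (hα : linkMap u x i γ = y⁻¹ * FreeGroup.of s ^ m * y) :
    ∃ (y' : FreeGroup (LinkBasis e i')) (s' : LinkBasis e i') (j' : Option (Fin l)) (m' : ℤ),
      linkVertex e i' s' = some j' ∧ linkMap v x' i' γ = y'⁻¹ * FreeGroup.of s' ^ m' * y' ∧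
      |(m' : ℚ)| = stretch u v (vgen (x * (modelσ d i y)⁻¹) j) * |(m : ℚ)| := by
  obtain ⟨b, hb⟩ := eq_of_commute hγ
  set z := x * (modelσ d i y)⁻¹ with hz
  have hconj : x * modelσ d i (y⁻¹ * FreeGroup.of s ^ m * y) * x⁻¹ = vgen z j ^ m := by
    rw [map_mul, map_mul, map_inv, map_zpow, modelσ_of hs, vgen_zpow, hz]; group
  rw [hα, hconj] at hb
  obtain ⟨z', j', h2⟩ := h.exists_linked z j
  have hcomm : Commute (vgen z j) (vgen x i) := by
    refine commute_conj_iff.2 ?_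
    have : x⁻¹ * vgen z j * x = modelσ d i (y⁻¹ * FreeGroup.of s * y) := by
      rw [map_mul, map_mul, map_inv, modelσ_of hs, hz]; unfold vgen; group
    rw [this]
    exact modelσ_comm i _
  have hcomm' := h1.commute_vgen h h2 hcomm
  -- `vgen z j` is linked to `vgen z' j'`, which is distinct from `vgen x' i'` and commutes with it
  rcases _root_.commute_vgen hcomm' with heq | ⟨s', f, hs', heq⟩
  · exfalso
    rw [heq] at h2
    have h3 := (h2.symm.unique h.symm h1.symm).1
    have h4 : x⁻¹ * vgen z j * x = modelGen d i := by rw [h3]; unfold vgen; group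
    have h5 : x⁻¹ * vgen z j * x = modelσ d i (y⁻¹ * FreeGroup.of s * y) := by
      rw [map_mul, map_mul, map_inv, modelσ_of hs, hz]; unfold vgen; group
    have h6 := congrArg (modelρ d i) (h5.symm.trans h4)
    rw [modelρ_σ, modelρ_gen_self, mul_eq_one_iff_eq_inv, mul_eq_left] at h6
    exact FreeGroup.of_ne_one _ h6
  · obtain ⟨δ, N, N', hN, hN', e1, e2⟩ := h2
    obtain ⟨ε, M, M', hM, hM', e3, e4⟩ := h1
    -- a common power expresses `γ` through elements whose images under `v` are known
    have key : γ ^ (N * M) = ε ^ (b * N) * δ ^ (m * M) := by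
      apply h.inj_u
      have c1 : Commute (vgen x i ^ b) (vgen z j ^ m) := (hcomm.zpow_zpow m b).symm
      rw [map_mul, map_zpow, map_zpow, map_zpow, hb, e1, e3, c1.mul_zpow, ← zpow_mul, ← zpow_mul,
        ← zpow_mul, ← zpow_mul]
      congr 2 <;> ring
    have hδ : linkMap v x' i' δ = f * FreeGroup.of s' ^ N' * f⁻¹ := by
      apply linkMap_of_eq (b := 0)
      rw [e2, heq, vgen_zpow, map_mul, map_mul, map_inv, map_zpow, modelσ_of hs', zpow_zero,
        one_mul]
      group
    have h3 := congrArg (linkMap v x' i') key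
    rw [map_mul, map_zpow, map_zpow, map_zpow, linkMap_vgen e4, one_zpow, one_mul, hδ, conj_zpow,
      ← zpow_mul] at h3
    have hconj' : (f⁻¹ * linkMap v x' i' γ * f) ^ (N * M) = FreeGroup.of s' ^ (N' * (m * M)) := by
      have : f⁻¹ * linkMap v x' i' γ * f = f⁻¹ * linkMap v x' i' γ * f⁻¹⁻¹ := by rw [inv_inv]
      rw [this, conj_zpow, h3]
      group
    by_cases hm : m = 0
    · subst hm
      have h4 : f⁻¹ * linkMap v x' i' γ * f = 1 := by
        rw [← IsMulTorsionFree.zpow_eq_one_iff_left (mul_ne_zero hN hM), hconj']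
        simp
      refine ⟨f⁻¹, s', j', 0, hs', ?_, by simp⟩
      rw [mul_assoc, inv_mul_eq_one, eq_comm] at h4
      rw [zpow_zero, inv_inv, mul_one, mul_inv_cancel]
      exact mul_eq_right.1 h4
    · have h4 : Commute (f⁻¹ * linkMap v x' i' γ * f) (FreeGroup.of s' ^ (N' * (m * M))) := by
        rw [← hconj']; exact Commute.self_zpow _ _
      obtain ⟨m', hm'⟩ := freeGroup_eq_zpow_of_commute
        (mul_ne_zero hN' (mul_ne_zero hm hM)) h4
      have h5 : m' * (N * M) = N' * (m * M) := by
        rw [hm', ← zpow_mul] at hconj'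
        by_contra hne
        exact freeGroup_of_zpow_ne_one s' (sub_ne_zero.2 hne) (by
          rw [zpow_sub, hconj', mul_inv_cancel])
      have h6 : m' * N = N' * m := by
        apply mul_right_cancel₀ hM
        rw [mul_assoc, h5, mul_assoc]
      refine ⟨f⁻¹, s', j', m', hs', ?_, ?_⟩
      · rw [← hm']; group
      · rw [stretch_eq h hN hN' e1 e2]
        have hN0 : |(N : ℚ)| ≠ 0 := by simpa using hN
        have := abs_cast_mul_eq h6
        push_cast
        field_simp
        linarith

variable (d) in
/-- The link vertices that are not leaves: all pivots for the centre, the centre for a pivot. -/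
noncomputable def innerLink (i : Option (Fin k)) : Finset (LinkBasis d i) :=
  Finset.univ.filter fun b => (linkVertex d i b).isSome

theorem mem_innerLink {i : Option (Fin k)} {b : LinkBasis d i} :
    b ∈ innerLink d i ↔ ∃ j, linkVertex d i b = some j := by
  simp [innerLink, Option.isSome_iff_exists]

theorem innerLink_none : innerLink d none = Finset.univ := by
  ext b
  simp only [Finset.mem_univ, iff_true, mem_innerLink]
  exact ⟨_, rfl⟩

theorem innerLink_some (i : Fin k) : innerLink d (some i) = {linkCenter d i} := by
  ext b
  rw [mem_innerLink, Finset.mem_singleton]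
  rcases link_cases b with rfl | ⟨s, rfl⟩
  · exact ⟨fun _ => rfl, fun _ => ⟨_, rfl⟩⟩
  · refine ⟨?_, ?_⟩
    · rintro ⟨j, hj⟩; cases hj
    · intro h; cases h

/-- The number of inner link vertices divided by minus the Euler characteristic of the free group
on the link; see `linkWeight_mul`. -/
noncomputable def linkWeight (e : Fin l → ℕ) : Option (Fin l) → ℚ
  | none => l / (l - 1)
  | some j => 1 / e j

theorem linkWeight_mul (h : CommPair u v) (i' : Option (Fin l)) :
    linkWeight e i' * (Fintype.card (LinkBasis e i') - 1) = (innerLink e i').card := by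
  cases i' with
  | none =>
    rw [innerLink_none, Finset.card_univ, card_link_none, linkWeight]
    have : (l : ℚ) - 1 ≠ 0 := by
      have : (2 : ℚ) ≤ l := by exact_mod_cast h.hl
      intro h0; linarith
    field_simp
  | some j =>
    rw [innerLink_some, Finset.card_singleton, card_link_some, linkWeight]
    have : (e j : ℚ) ≠ 0 := by exact_mod_cast (h.he j).ne'
    push_cast
    field_simp
    ring

end LinkMap

/-! ### Double counting -/

section Averaging
variable {k l : ℕ} {d : Fin k → ℕ} {e : Fin l → ℕ} {Γ : Type} [Group Γ]
  {u : Γ →* TreeModel d} {v : Γ →* TreeModel e}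

/-- The elements which an embedding carries into the centralizer of a conjugate of a vertex
generator. -/
def centralizerIn (u : Γ →* TreeModel d) (x : TreeModel d) (i : Option (Fin k)) : Subgroup Γ :=
  (Subgroup.centralizer {vgen x i}).comap u

theorem mem_centralizerIn {x : TreeModel d} {i : Option (Fin k)} {γ : Γ} :
    γ ∈ centralizerIn u x i ↔ Commute (u γ) (vgen x i) := by
  rw [centralizerIn, Subgroup.mem_comap, Subgroup.mem_centralizer_singleton_iff]
  exact Iff.rfl

theorem mem_linkMap_range {x : TreeModel d} {i : Option (Fin k)} {f : FreeGroup (LinkBasis d i)} :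
    f ∈ ((linkMap u x i).comp (centralizerIn u x i).subtype).range ↔
      ∃ γ, Commute (u γ) (vgen x i) ∧ linkMap u x i γ = f := by
  rw [MonoidHom.mem_range]
  constructor
  · rintro ⟨⟨γ, hγ⟩, h⟩
    exact ⟨γ, mem_centralizerIn.1 hγ, h⟩
  · rintro ⟨γ, hγ, h⟩
    exact ⟨⟨γ, mem_centralizerIn.2 hγ⟩, h⟩

theorem finiteIndex_comap {G H : Type*} [Group G] [Group H] (f : H →* G) (K : Subgroup G)
    [K.FiniteIndex] : (K.comap f).FiniteIndex := by
  rw [Subgroup.finiteIndex_iff, Subgroup.index_comap]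
  exact (Subgroup.instFiniteIndex_subgroupOf K f.range).index_ne_zero

/-- The image of the link map on the centralizer has finite index, since it contains every element
of the free group on the link that belongs, conjugated by `x`, to the common subgroup. -/
theorem CommPair.finiteIndex_linkMap (h : CommPair u v) (x : TreeModel d) (i : Option (Fin k)) :
    ((linkMap u x i).comp (centralizerIn u x i).subtype).range.FiniteIndex := by
  have := h.fin_u
  have := finiteIndex_comap ((MulAut.conj x).toMonoidHom.comp (modelσ d i)) u.range
  refine Subgroup.finiteIndex_of_le (H := u.range.comap
    ((MulAut.conj x).toMonoidHom.comp (modelσ d i))) ?_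
  rintro f ⟨γ, hγ⟩
  have hγ' : u γ = vgen x i ^ (0 : ℤ) * (x * modelσ d i f * x⁻¹) := by
    rw [zpow_zero, one_mul, hγ]; rfl
  refine mem_linkMap_range.2 ⟨γ, ?_, linkMap_of_eq hγ'⟩
  rw [hγ', zpow_zero, one_mul]
  exact (Commute.conj_iff x).2 (modelσ_comm i f)

/-- The sum of the stretch factors of the conjugates of the centre adjacent to a given conjugate of
a pivot, one for each coset of the image `R` of the link map. By `sum_stretch_eq` it is the number
of inner link vertices times the index on the other side, and this index is determined by the Euler
characteristic. -/
theorem Linked.sum_stretch (h : CommPair u v) {x : TreeModel d} {i : Fin k}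
    {x' : TreeModel e} {i' : Option (Fin l)} (h1 : Linked u v (vgen x (some i)) (vgen x' i'))
    {R : Subgroup (FreeGroup (LinkBasis d (some i)))}
    (hR : ((linkMap u x (some i)).comp (centralizerIn u x (some i)).subtype).range = R)
    [Fintype (FreeGroup (LinkBasis d (some i)) ⧸ R)] :
    ∑ q : FreeGroup (LinkBasis d (some i)) ⧸ R,
      stretch u v (vgen (x * (modelσ d (some i) q.out)⁻¹) none)
      = R.index * (d i * linkWeight e i') := by
  classical
  set A := centralizerIn u x (some i) with hA
  have hA' : ∀ γ : A, Commute (u γ) (vgen x (some i)) := fun γ => mem_centralizerIn.1 γ.2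
  have hA2 : A = centralizerIn v x' i' := by
    ext γ
    rw [hA, mem_centralizerIn, mem_centralizerIn]
    exact ⟨fun hγ => h1.commute h hγ, fun hγ => h1.symm.commute h.symm hγ⟩
  have hA'' : ∀ γ : A, Commute (v γ) (vgen x' i') := fun γ => h1.commute h (hA' γ)
  have hf1 := h.finiteIndex_linkMap x (some i)
  have hf2 : ((linkMap v x' i').comp A.subtype).range.FiniteIndex := by
    rw [hA2]; exact h.symm.finiteIndex_linkMap x' i'
  rw [← hA] at hf1
  have hα0 : ∀ γ : A, (linkMap u x (some i)).comp A.subtype γ = linkMap u x (some i) γ :=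
    fun _ => rfl
  have hα0' : ∀ γ : A, (linkMap v x' i').comp A.subtype γ = linkMap v x' i' γ := fun _ => rfl
  generalize (linkMap u x (some i)).comp A.subtype = α at *
  generalize (linkMap v x' i').comp A.subtype = α' at *
  subst hR
  have hker : α.ker = α'.ker := by
    ext γ
    rw [MonoidHom.mem_ker, MonoidHom.mem_ker, hα0, hα0']
    exact ⟨fun hγ => h1.linkMap_eq_one h (hA' γ) hγ,
      fun hγ => h1.symm.linkMap_eq_one h.symm (hA'' γ) hγ⟩
  let L : LinkBasis d (some i) → FreeGroup (LinkBasis d (some i)) → ℚ := fun _ y =>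
    stretch u v (vgen (x * (modelσ d (some i) y)⁻¹) none)
  have hsum := sum_stretch_eq hker (innerLink d (some i)) (innerLink e i') L
    (by
      intro γ y s hs m hm hγ
      rw [innerLink_some, Finset.mem_singleton] at hs
      subst hs
      obtain ⟨y', s', j', m', e1, e2, e3⟩ :=
        h1.linkMap_conj h (hA' γ) (j := none) (s := linkCenter d i) rfl
          ((hα0 γ).symm.trans hγ)
      exact ⟨y', s', mem_innerLink.2 ⟨j', e1⟩, m', (hα0' γ).trans e2,
        by rw [Int.cast_abs]; exact e3⟩)
    (by
      intro γ y s hs m hm hγ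
      obtain ⟨j, hj⟩ := mem_innerLink.1 hs
      obtain ⟨y', s', j', m', e1, e2, e3⟩ := h1.symm.linkMap_conj h.symm (hA'' γ) hj
        ((hα0' γ).symm.trans hγ)
      exact ⟨y', s', mem_innerLink.2 ⟨j', e1⟩, m', (hα0 γ).trans e2⟩)
  rw [innerLink_some, Finset.sum_singleton] at hsum
  refine hsum.trans ?_
  rw [← linkWeight_mul h]
  -- the Euler characteristics of the two finite index subgroups agree
  have hχ := index_mul_card_eq α α' hker
  rw [card_link_some] at hχ
  have hχ' : (α.range.index : ℚ) * (d i + 1) + α'.range.index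
      = α'.range.index * Fintype.card (LinkBasis e i') + α.range.index := by exact_mod_cast hχ
  linear_combination -(linkWeight e i') * hχ'

/-- If the image of the common subgroup is normal, the ranges of the link maps at all conjugates
of a vertex coincide. -/
theorem linkMap_range_eq [hN : u.range.Normal] (x : TreeModel d) (i : Option (Fin k)) :
    ((linkMap u x i).comp (centralizerIn u x i).subtype).range
      = ((linkMap u 1 i).comp (centralizerIn u 1 i).subtype).range := by
  have key : ∀ x (f : FreeGroup (LinkBasis d i)),
      f ∈ ((linkMap u x i).comp (centralizerIn u x i).subtype).range ↔
      ∃ b : ℤ, modelGen d i ^ b * modelσ d i f ∈ u.range := by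
    intro x f
    have hconj : ∀ b : ℤ, x * (modelGen d i ^ b * modelσ d i f) * x⁻¹
        = vgen x i ^ b * (x * modelσ d i f * x⁻¹) := by
      intro b; rw [vgen_zpow]; group
    rw [mem_linkMap_range]
    constructor
    · rintro ⟨γ, hγ, hf⟩
      obtain ⟨b, hb⟩ := eq_of_commute hγ
      refine ⟨b, ?_⟩
      have h2 := hN.conj_mem (u γ) (MonoidHom.mem_range.2 ⟨γ, rfl⟩) x⁻¹
      rw [hb, hf, ← hconj] at h2
      convert h2 using 1
      group
    · rintro ⟨b, hb⟩
      have h2 := hN.conj_mem _ hb x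
      rw [hconj] at h2
      obtain ⟨γ, hγ⟩ := MonoidHom.mem_range.1 h2
      refine ⟨γ, ?_, linkMap_of_eq hγ⟩
      rw [hγ]
      exact (Commute.zpow_self _ _).mul_left ((Commute.conj_iff x).2 (modelσ_comm i f))
  ext f
  rw [key, key]

/-- The stretch factor of a conjugate by `g` depends only on the coset of `g`. -/
theorem CommPair.stretch_eq_out (h : CommPair u v) [hN : u.range.Normal] (g : TreeModel d)
    (i : Option (Fin k)) :
    stretch u v (vgen g i) = stretch u v (vgen (g : TreeModel d ⧸ u.range).out i) := by
  obtain ⟨⟨t, ht⟩, hg⟩ := QuotientGroup.mk_out_eq_mul u.range g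
  obtain ⟨δ, hδ⟩ := MonoidHom.mem_range.1 (hN.conj_mem _ ht g)
  have : g * t = u δ * g := by rw [hδ]; group
  rw [hg, this, stretch_conj h]

/-- Double counting: the sum of `Linked.sum_stretch` over all cosets of the common subgroup counts
every coset of a conjugate of the centre equally often, so that the total stretch of the conjugates
of the centre, which does not involve `i`, can be computed at the conjugates of any pivot `i`. -/
theorem CommPair.total_stretch (h : CommPair u v) [u.range.Normal]
    [Fintype (TreeModel d ⧸ u.range)] (i : Fin k) :
    ∃ (X' : TreeModel d ⧸ u.range → TreeModel e) (I' : TreeModel d ⧸ u.range → Option (Fin l)),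
      (∀ q, Linked u v (vgen q.out (some i)) (vgen (X' q) (I' q))) ∧
      ∑ q : TreeModel d ⧸ u.range, stretch u v (vgen q.out none)
        = d i * ∑ q, linkWeight e (I' q) := by
  classical
  choose X' I' hX using fun q : TreeModel d ⧸ u.range => h.exists_linked q.out (some i)
  refine ⟨X', I', hX, ?_⟩
  set R := ((linkMap u 1 (some i)).comp (centralizerIn u 1 (some i)).subtype).range with hR
  have hRf : R.FiniteIndex := h.finiteIndex_linkMap 1 (some i)
  have : Fintype (FreeGroup (LinkBasis d (some i)) ⧸ R) := Fintype.ofFinite _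
  have h1 := fun q => (hX q).sum_stretch h (linkMap_range_eq q.out (some i))
  have h2 : ∀ (q : TreeModel d ⧸ u.range) (g : TreeModel d),
      stretch u v (vgen (q.out * g⁻¹) none)
        = stretch u v (vgen (q * (g : TreeModel d ⧸ u.range)⁻¹).out none) := by
    intro q g
    rw [h.stretch_eq_out]
    congr 3
    rw [QuotientGroup.mk_mul, QuotientGroup.mk_inv, QuotientGroup.out_eq']
  have h3 := Finset.sum_congr (rfl : (Finset.univ : Finset (TreeModel d ⧸ u.range)) = _)
    fun q _ => h1 q
  -- exchange the sums: for a fixed link coset, the conjugates of the centre are permuted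
  simp only [h2] at h3
  rw [Finset.sum_comm] at h3
  have h4 : ∀ c : TreeModel d ⧸ u.range,
      ∑ q, stretch u v (vgen (q * c).out none) = ∑ q : TreeModel d ⧸ u.range,
        stretch u v (vgen q.out none) := fun c =>
    Fintype.sum_equiv (Equiv.mulRight c) _ _ fun q => rfl
  simp only [h4] at h3
  rw [Finset.sum_const, Finset.card_univ, ← Nat.card_eq_fintype_card, nsmul_eq_mul,
    ← Finset.mul_sum, ← Finset.mul_sum] at h3
  refine mul_left_cancel₀ ?_ h3
  exact_mod_cast hRf.index_ne_zero

end Averaging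

/-! ### Centres, pivots and the conclusion -/

section Conclusion
variable {k l : ℕ} {d : Fin k → ℕ} {e : Fin l → ℕ} {Γ : Type} [Group Γ]
  {u : Γ →* TreeModel d} {v : Γ →* TreeModel e}

/-- The common finite index subgroup may be taken to be normal on one side, without changing which
elements are linked. -/
theorem CommPair.exists_normal (h : CommPair u v) : ∃ Γ₀ : Subgroup Γ,
    CommPair (u.comp Γ₀.subtype) (v.comp Γ₀.subtype) ∧ (u.comp Γ₀.subtype).range.Normal ∧
    ∀ p p', Linked u v p p' ↔ Linked (u.comp Γ₀.subtype) (v.comp Γ₀.subtype) p p' := by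
  have hu := h.fin_u
  have hv := h.fin_v
  have hcore := Subgroup.finiteIndex_normalCore u.range
  set Γ₀ := u.range.normalCore.comap u with hΓ₀
  have hfin : Γ₀.FiniteIndex := finiteIndex_comap u _
  have hru : (u.comp Γ₀.subtype).range = u.range.normalCore := by
    rw [MonoidHom.range_comp, Subgroup.range_subtype, hΓ₀, Subgroup.map_comap_eq]
    exact inf_eq_right.2 (Subgroup.normalCore_le _)
  have hrv : (v.comp Γ₀.subtype).range.FiniteIndex := by
    rw [MonoidHom.range_comp, Subgroup.range_subtype, Subgroup.finiteIndex_iff,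
      Subgroup.index_map]
    exact mul_ne_zero (Subgroup.finiteIndex_of_le (le_sup_left : Γ₀ ≤ _)).index_ne_zero
      hv.index_ne_zero
  refine ⟨Γ₀, ⟨h.inj_u.comp Γ₀.subtype_injective, h.inj_v.comp Γ₀.subtype_injective, ?_, hrv,
    h.hk, h.hl, h.hd, h.he⟩, ?_, ?_⟩
  · rw [hru]; exact hcore
  · rw [hru]; infer_instance
  · intro p p'
    constructor
    · rintro ⟨γ, a, b, ha, hb, h1, h2⟩
      obtain ⟨N, hN, -, hγ⟩ := Subgroup.exists_pow_mem_of_index_ne_zero hfin.index_ne_zero γ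
      have hN' : (N : ℤ) ≠ 0 := by exact_mod_cast hN.ne'
      refine ⟨⟨γ ^ N, hγ⟩, a * N, b * N, mul_ne_zero ha hN', mul_ne_zero hb hN', ?_, ?_⟩
      · rw [zpow_mul, ← h1, zpow_natCast, ← map_pow]; rfl
      · rw [zpow_mul, ← h2, zpow_natCast, ← map_pow]; rfl
    · rintro ⟨γ, a, b, ha, hb, h1, h2⟩
      exact ⟨γ, a, b, ha, hb, h1, h2⟩

/-- The averaging identity: the weights of the vertices linked to conjugates of a pivot, summed over
a finite set that does not depend on the pivot, are inversely proportional to the number of leaves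
of the pivot. -/
theorem CommPair.average (h : CommPair u v) :
    ∃ (Q : Type) (_ : Fintype Q) (_ : Nonempty Q) (ρ : ℚ), ∀ i : Fin k,
      ∃ I' : Q → Option (Fin l),
        (∀ q, ∃ x x', Linked u v (vgen x (some i)) (vgen x' (I' q))) ∧
        (∀ x x' j', Linked u v (vgen x (some i)) (vgen x' j') → ∃ q, I' q = j') ∧
        ρ = d i * ∑ q, linkWeight e (I' q) := by
  obtain ⟨Γ₀, h₀, hn, hlink⟩ := h.exists_normal
  simp only [hlink]
  generalize u.comp Γ₀.subtype = u₀ at *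
  generalize v.comp Γ₀.subtype = v₀ at *
  have hf := h₀.fin_u
  have hQ : Fintype (TreeModel d ⧸ u₀.range) := Fintype.ofFinite _
  refine ⟨TreeModel d ⧸ u₀.range, hQ, ⟨((1 : TreeModel d) : TreeModel d ⧸ u₀.range)⟩,
    ∑ q : TreeModel d ⧸ u₀.range, stretch u₀ v₀ (vgen q.out none), fun i => ?_⟩
  obtain ⟨X', I', hX, hsum⟩ := h₀.total_stretch i
  refine ⟨I', fun q => ⟨_, _, hX q⟩, ?_, hsum⟩
  intro x x' j' hx
  refine ⟨(x : TreeModel d ⧸ u₀.range), ?_⟩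
  obtain ⟨⟨t, ht⟩, hg⟩ := QuotientGroup.mk_out_eq_mul u₀.range x
  obtain ⟨δ, hδ⟩ := MonoidHom.mem_range.1 (hn.conj_mem _ ht x)
  have h1 : x * t = u₀ δ * x := by rw [hδ]; group
  have h2 := hX (x : TreeModel d ⧸ u₀.range)
  rw [hg, h1] at h2
  exact (h2.unique h₀ (hx.conj δ)).2

/-- A conjugate of the centre is linked to a conjugate of the centre exactly if a commuting
conjugate of a pivot is linked to a conjugate of a pivot: distinct commuting conjugates of vertex
generators are of different kinds. -/
theorem Linked.isSome_iff (h : CommPair u v) {x y : TreeModel d} {i : Fin k}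
    {x' y' : TreeModel e} {i' j' : Option (Fin l)} (h1 : Linked u v (vgen x (some i)) (vgen x' i'))
    (h2 : Linked u v (vgen y none) (vgen y' j')) (hc : Commute (vgen y none) (vgen x (some i))) :
    i'.isSome ↔ j' = none := by
  have hc' := h1.commute_vgen h h2 hc
  have hne : vgen y' j' ≠ vgen x' i' := by
    intro heq
    rw [heq] at h2
    cases (h2.symm.unique h.symm h1.symm).2
  have := isSome_ne_of_commute hc' hne
  cases i' <;> cases j' <;> simp_all

theorem commute_vgen_none (x : TreeModel d) (i : Fin k) :
    Commute (vgen x none) (vgen x (some i)) :=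
  (Commute.conj_iff x).2 (modelGen_comm_none i)

/-- The conjugate of the centre by `x` is linked to a conjugate of the centre. -/
def CenterLinked (u : Γ →* TreeModel d) (v : Γ →* TreeModel e) (x : TreeModel d) : Prop :=
  ∃ x', Linked u v (vgen x none) (vgen x' none)

theorem CommPair.centerLinked_iff (h : CommPair u v) {x : TreeModel d} {i : Fin k}
    {x' : TreeModel e} {i' : Option (Fin l)} (h1 : Linked u v (vgen x (some i)) (vgen x' i')) :
    CenterLinked u v x ↔ i'.isSome := by
  obtain ⟨y', j', h2⟩ := h.exists_linked x none
  rw [h1.isSome_iff h h2 (commute_vgen_none x i)]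
  constructor
  · rintro ⟨z', h3⟩
    exact (h2.unique h h3).2
  · rintro rfl
    exact ⟨_, h2⟩

/-- Since the group is generated by the centralizers of the vertex generators, whether centres are linked to centres does not
depend on the conjugate. -/
theorem CommPair.centerLinked_const (h : CommPair u v) (x y : TreeModel d) :
    CenterLinked u v x ↔ CenterLinked u v y := by
  have key : ∀ z ∈ Subgroup.closure {g : TreeModel d | ∃ i, Commute g (modelGen d i)},
      ∀ x, CenterLinked u v (x * z) ↔ CenterLinked u v x := by
    intro z hz
    induction hz using Subgroup.closure_induction with
    | mem z hz =>
      intro x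
      obtain ⟨i, hi⟩ := hz
      cases i with
      | none => unfold CenterLinked; rw [vgen_mul_of_commute hi]
      | some i =>
        obtain ⟨x', i', h1⟩ := h.exists_linked x (some i)
        have h2 := h1
        rw [← vgen_mul_of_commute hi] at h2
        rw [h.centerLinked_iff h1, h.centerLinked_iff h2]
    | one => intro x; rw [mul_one]
    | mul a b _ _ ha hb => intro x; rw [← mul_assoc, hb, ha]
    | inv a _ ha => intro x; rw [← ha (x * a⁻¹), inv_mul_cancel_right]
  have := key (x⁻¹ * y) (by rw [model_generation]; trivial) x
  rw [mul_inv_cancel_left] at this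
  exact this.symm

/-- Centres are linked to centres: otherwise all pivots would be linked to centres, the averages
would all have the same value, and all pivots would carry the same number of leaves. -/
theorem CommPair.centerLinked (h : CommPair u v) (hm : StrictMono d) (x : TreeModel d) :
    CenterLinked u v x := by
  by_contra hx
  obtain ⟨Q, _, _, ρ, hρ⟩ := h.average
  have hl : (2 : ℚ) ≤ l := by exact_mod_cast h.hl
  have hw : (l : ℚ) / (l - 1) ≠ 0 := div_ne_zero (by linarith) (by linarith)
  have key : ∀ i, ρ = d i * (Fintype.card Q * (l / (l - 1))) := by
    intro i
    obtain ⟨I', h1, -, h3⟩ := hρ i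
    have h4 : ∀ q, I' q = none := by
      intro q
      obtain ⟨y, y', hy⟩ := h1 q
      rw [h.centerLinked_const x y, h.centerLinked_iff hy] at hx
      simpa using hx
    rw [h3]
    simp only [h4, linkWeight, Finset.sum_const, Finset.card_univ, nsmul_eq_mul]
  have h0 : 0 < k := by have := h.hk; omega
  have h1 : 1 < k := by have := h.hk; omega
  have h2 := (key ⟨0, h0⟩).symm.trans (key ⟨1, h1⟩)
  have hQ : (Fintype.card Q : ℚ) ≠ 0 := by exact_mod_cast Fintype.card_ne_zero
  have h3 := mul_right_cancel₀ (mul_ne_zero hQ hw) h2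
  have h4 : d ⟨0, h0⟩ < d ⟨1, h1⟩ := hm (by simp [Fin.lt_def])
  exact h4.ne (by exact_mod_cast h3)

/-- The reciprocal leaf numbers of the pivots linked to a given pivot have an average inversely
proportional to its leaf number. -/
theorem CommPair.isAverage (h : CommPair u v) (hm : StrictMono d) :
    ∃ r : ℚ, ∀ i : Fin k, IsAverage (r / d i)
      (fun j => ∃ x x', Linked u v (vgen x (some i)) (vgen x' (some j)))
      (fun j => 1 / (e j : ℚ)) := by
  obtain ⟨Q, hQ, hne, ρ, hρ⟩ := h.average
  refine ⟨ρ / Fintype.card Q, fun i => ?_⟩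
  obtain ⟨I', h1, h2, h3⟩ := hρ i
  have h4 : ∀ q, ∃ j, I' q = some j := by
    intro q
    obtain ⟨y, y', hy⟩ := h1 q
    exact Option.isSome_iff_exists.1 ((h.centerLinked_iff hy).1 (h.centerLinked hm y))
  choose f hf using h4
  refine ⟨Q, hQ, hne, f, ?_, ?_, ?_⟩
  · intro q
    obtain ⟨y, y', hy⟩ := h1 q
    rw [hf] at hy
    exact ⟨y, y', hy⟩
  · rintro j ⟨x, x', hx⟩
    obtain ⟨q, hq⟩ := h2 x x' _ hx
    exact ⟨q, Option.some_inj.1 ((hf q).symm.trans hq)⟩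
  · have hd : (d i : ℚ) ≠ 0 := by exact_mod_cast (h.hd i).ne'
    have hc : (Fintype.card Q : ℚ) ≠ 0 := by exact_mod_cast Fintype.card_ne_zero
    rw [h3]
    simp only [hf, linkWeight]
    field_simp

theorem CommPair.proportional (h : CommPair u v) (hm : StrictMono d) (hn : StrictMono e) :
    ∃ h : k = l, ∀ i j : Fin k, e (Fin.cast h i) * d j = e (Fin.cast h j) * d i := by
  obtain ⟨r, hr⟩ := h.isAverage hm
  obtain ⟨r', hr'⟩ := h.symm.isAverage hn
  refine proportional_of_averages d e (by have := h.hk; omega) (by have := h.hl; omega) hm hn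
    h.hd h.he _ r r' hr ?_
  intro j
  convert hr' j using 2 with i
  constructor
  · rintro ⟨x, x', hx⟩; exact ⟨x', x, hx.symm⟩
  · rintro ⟨x, x', hx⟩; exact ⟨x', x, hx.symm⟩

end Conclusion

theorem stmt1 (k l : ℕ) (m : Fin k → ℕ) (n : Fin l → ℕ)
    (hk : 2 ≤ k) (hl : 2 ≤ l)
    (hm : StrictMono m) (hn : StrictMono n)
    (hmpos : ∀ i, 0 < m i) (hnpos : ∀ i, 0 < n i)
    (hcomm : GroupsCommensurable (RAAG (t4Graph k m (fun _ => 1) 0))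
      (RAAG (t4Graph l n (fun _ => 1) 0))) :
    ∃ h : k = l, ∀ i j : Fin k,
      n (Fin.cast h i) * m j = n (Fin.cast h j) * m i := by
  obtain ⟨A, B, hA, hB, ⟨φ⟩⟩ := hcomm
  have hfin : ∀ {G H : Type} [Group G] [Group H] (ψ : G ≃* H) (C : Subgroup G), C.FiniteIndex →
      (C.map ψ.toMonoidHom).FiniteIndex := by
    intro G H _ _ ψ C hC
    rw [Subgroup.finiteIndex_iff, Subgroup.index_map_of_bijective ψ.bijective]
    exact hC.index_ne_zero
  have h : CommPair ((raagEquiv m).toMonoidHom.comp A.subtype)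
      ((raagEquiv n).toMonoidHom.comp (B.subtype.comp φ.toMonoidHom)) := by
    refine ⟨(raagEquiv m).injective.comp A.subtype_injective,
      (raagEquiv n).injective.comp (B.subtype_injective.comp φ.injective), ?_, ?_,
      hk, hl, hmpos, hnpos⟩
    · rw [MonoidHom.range_comp, Subgroup.range_subtype]
      exact hfin _ A hA
    · rw [MonoidHom.range_comp, MonoidHom.range_comp, MonoidHom.range_eq_top.2 φ.surjective,
        ← MonoidHom.range_eq_map, Subgroup.range_subtype]
      exact hfin _ B hB
  exact h.proportional hm hn
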